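/- arXiv:2112.13053 — 3 statements merged into one kernel-verified Lean document; each statement's English description precedes it below -/
import Mathlib

section
/- Let ξ and η be jointly stationary and ergodic random measures on ℝ^d with λ_ξ = λ_η < ∞, such that ξ is diffuse and η = η^disc + η^diff is mixed, where η^disc is a non-zero discrete random measure and η^diff is a non-zero diffuse random measure. Then there exists an allocation τ balancing ξ and η. -/
/-!
The proof is a greedy transport guided by the atoms of the destination.

Both random measures are first replaced by almost surely equal kernels that are equivariant for
*every* `ω` (`exists_perfect_of_randomMeasure`), the source being diffuse for every `ω`. This makes
it harmless to evaluate them along the uncountably many shifts that occur below.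

The atoms of `η` serve as reference points that are determined by the configuration. An atom `y` is
an *anchor* at scale `r` if it carries more than half of the mass of its closed `r`-neighbourhood;
anchors at scale `r` are more than `r` apart, and each atom is an anchor at all small scales. Given
`r` and two small balls `C`, `C'` of diameter at most `r`, a greedy step transports, around each
anchor `y` at once, the remaining source on `y + C` into the remaining destination on `y + C'` until
one of the two is exhausted (`exists_step`). The sets `y + C` are disjoint for different anchors, and
so are the sets `y + C'`. The local transport is a quantile coupling, which exists because the
source is diffuse, and it depends measurably on the configuration (`exists_local_transport`).

Carrying out such a step for each scale `1 / (k + 1)` and each pair of balls from a countable cover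
gives a partial allocation with the following property: whenever `η` has an atom, nothing is left of
the source or nothing is left of the destination (`exists_greedy`). Otherwise there would be
remaining mass of both kinds in two balls attached to the same anchor, which the corresponding step
would have transported.

By the mass transport principle (`mass_transport`) allocated source mass and covered destination
mass have the same intensity. As `λ_ξ = λ_η < ∞`, both remainders have the same intensity as well.
By ergodicity the source is used up with probability `0` or `1`, so one of the two remainders
vanishes almost surely. Then both have intensity zero, and both vanish almost surely.
-/

open MeasureTheory ENNReal

noncomputable section

/-- Measurable structure on `Option α`; the point `∞` is modeled by `none`. -/
instance {α : Type*} [MeasurableSpace α] : MeasurableSpace (Option α) :=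
  MeasurableSpace.map some inferInstance

namespace Paper

variable {Ω : Type*} [MeasurableSpace Ω]
variable {G : Type*} [MeasurableSpace G] [TopologicalSpace G] [AddCommGroup G]

/-- A measurable flow `(θ_x)_{x ∈ G}` on `Ω`. -/
structure IsMeasurableFlow (θ : G → Ω → Ω) : Prop where
  measurable : Measurable fun p : G × Ω => θ p.1 p.2
  id_eq : θ 0 = id
  comp : ∀ x y : G, θ x ∘ θ y = θ (x + y)

/-- `P` is stationary under the flow `θ`. -/
def IsStationary (P : Measure Ω) (θ : G → Ω → Ω) : Prop :=
  ∀ x : G, P.map (θ x) = P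

/-- `P` is ergodic under the flow `θ`: invariant events are trivial. -/
def IsErgodicFlow (P : Measure Ω) (θ : G → Ω → Ω) : Prop :=
  ∀ A : Set Ω, MeasurableSet A → (∀ x : G, θ x ⁻¹' A = A) → P A = 0 ∨ P A = 1

/-- A random measure: a measurable kernel which is a.s. locally finite
(finite on compact sets). -/
def IsRandomMeasure (P : Measure Ω) (ξ : Ω → Measure G) : Prop :=
  (∀ s : Set G, MeasurableSet s → Measurable fun ω => ξ ω s) ∧
    ∀ᵐ ω ∂P, ∀ K : Set G, IsCompact K → ξ ω K < ∞

/-- Flow-invariance (`joint stationarity`) of a random measure: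
`ξ(θ_x ω, C − x) = ξ(ω, C)`. -/
def IsFlowInvariant (P : Measure Ω) (θ : G → Ω → Ω) (ξ : Ω → Measure G) : Prop :=
  ∀ x : G, ∀ᵐ ω ∂P, ξ (θ x ω) = (ξ ω).map (fun y => y - x)

/-- A diffuse (non-atomic) random measure. -/
def IsDiffuseRM (P : Measure Ω) (ξ : Ω → Measure G) : Prop :=
  ∀ᵐ ω ∂P, ∀ x : G, ξ ω {x} = 0

/-- A discrete (purely atomic) random measure: a.s. carried by a countable set. -/
def IsDiscreteRM (P : Measure Ω) (ξ : Ω → Measure G) : Prop :=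
  ∀ᵐ ω ∂P, ∃ s : Set G, s.Countable ∧ ξ ω sᶜ = 0

/-- A locally finite set of points. -/
def LocallyFiniteSet (s : Set G) : Prop :=
  ∀ x : G, ∃ U ∈ nhds x, (s ∩ U).Finite

/-- A simple point process: a.s. the counting measure of a locally finite set. -/
def IsSimplePointProcess (P : Measure Ω) (χ : Ω → Measure G) : Prop :=
  ∀ᵐ ω ∂P, ∃ s : Set G, LocallyFiniteSet s ∧ χ ω = Measure.count.restrict s

/-- An allocation: a jointly measurable, translation-equivariant map
`Ω × G → G ∪ {∞}`, where `∞` is modeled by `none`. -/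
def IsAllocation (P : Measure Ω) (θ : G → Ω → Ω) (τ : Ω → G → Option G) : Prop :=
  Measurable (fun p : Ω × G => τ p.1 p.2) ∧
    ∀ᵐ ω ∂P, ∀ x y : G, τ (θ y ω) (x - y) = Option.map (fun z => z - y) (τ ω x)

/-- `τ` balances `ξ` and `η`: a.s. no `ξ`-mass is sent to `∞` and the image of
`ξ(ω)` under `τ(ω, ·)` is `η(ω)`. -/
def Balances (P : Measure Ω) (ξ η : Ω → Measure G) (τ : Ω → G → Option G) : Prop :=
  ∀ᵐ ω ∂P, ξ ω {z | τ ω z = none} = 0 ∧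
    ∀ C : Set G, MeasurableSet C → ξ ω {z | ∃ y ∈ C, τ ω z = some y} = η ω C

/-- Euclidean space `ℝ^d`. -/
abbrev Rd (d : ℕ) := EuclideanSpace ℝ (Fin d)

/-- The unit cube `[0,1]^d`. -/
def unitCube (d : ℕ) : Set (Rd d) := {x | ∀ i, x i ∈ Set.Icc (0 : ℝ) 1}

/-- The intensity `λ_ξ = E ξ([0,1]^d)` of a random measure on `ℝ^d`. -/
def intensity {d : ℕ} (P : Measure Ω) (ξ : Ω → Measure (Rd d)) : ℝ≥0∞ :=
  ∫⁻ ω, ξ ω (unitCube d) ∂P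

open ProbabilityTheory Set Filter Topology Pointwise

/-! ### Kernels and their joint measurability -/

/-- A kernel that is finite on each member of a countable cover, without any uniformity in the
parameter, is s-finite: cut it according to the integer part of the mass. -/
lemma isSFiniteKernel_of_cover {α β : Type*} [MeasurableSpace α] [MeasurableSpace β]
    (K : Kernel α β) (A : ℕ → Set β) (hA : ∀ n, MeasurableSet (A n)) (hcov : ⋃ n, A n = univ)
    (hfin : ∀ a n, K a (A n) < ∞) : IsSFiniteKernel K := by
  classical
  have hB : ∀ n, MeasurableSet (disjointed A n) := MeasurableSet.disjointed hA
  have hBfin : ∀ a n, K a (disjointed A n) < ∞ := fun a n =>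
    (measure_mono (disjointed_subset A n)).trans_lt (hfin a n)
  let S : ℕ × ℕ → Set α := fun p => {a | ⌊(K a (disjointed A p.1)).toReal⌋₊ = p.2}
  have hS : ∀ p, MeasurableSet (S p) := fun p => by
    have : Measurable fun a => ⌊(K a (disjointed A p.1)).toReal⌋₊ :=
      Nat.measurable_floor.comp (K.measurable_coe (hB _)).ennreal_toReal
    exact this (measurableSet_singleton p.2)
  let κ : ℕ × ℕ → Kernel α β := fun p => Kernel.piecewise (hS p) (K.restrict (hB p.1)) 0
  have hκ : ∀ p, IsSFiniteKernel (κ p) := fun p => by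
    have : IsFiniteKernel (κ p) := by
      refine ⟨⟨(p.2 : ℝ≥0∞) + 1, by finiteness, fun a => ?_⟩⟩
      by_cases ha : a ∈ S p
      · simp only [κ, Kernel.piecewise_apply, if_pos ha, Kernel.restrict_apply,
          Measure.restrict_apply_univ]
        have h1 := (Nat.lt_floor_add_one (K a (disjointed A p.1)).toReal).le
        rw [show ⌊(K a (disjointed A p.1)).toReal⌋₊ = p.2 from ha] at h1
        rw [← ENNReal.ofReal_toReal (hBfin a p.1).ne]
        refine (ENNReal.ofReal_le_ofReal h1).trans ?_
        rw [ENNReal.ofReal_add (by positivity) (by positivity)]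
        simp
      · simp [κ, Kernel.piecewise_apply, if_neg ha]
    infer_instance
  have hsum : Kernel.sum κ = K := by
    ext a s hs
    rw [Kernel.sum_apply' _ _ hs]
    rw [ENNReal.tsum_prod']
    have h1 : ∀ n, ∑' m, κ (n, m) a s = K a (s ∩ disjointed A n) := fun n => by
      rw [tsum_eq_single ⌊(K a (disjointed A n)).toReal⌋₊]
      · have : a ∈ S (n, ⌊(K a (disjointed A n)).toReal⌋₊) := rfl
        simp only [κ, Kernel.piecewise_apply, if_pos this, Kernel.restrict_apply,
          Measure.restrict_apply hs]
      · intro m hm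
        have : a ∉ S (n, m) := fun h => hm h.symm
        simp [κ, Kernel.piecewise_apply, if_neg this]
    simp_rw [h1]
    rw [← measure_iUnion]
    · rw [← inter_iUnion, iUnion_disjointed, hcov, inter_univ]
    · intro i j hij
      exact (disjoint_disjointed A hij).mono inter_subset_right inter_subset_right
    · exact fun n => hs.inter (hB n)
  rw [← hsum]
  infer_instance

lemma measurable_kernel_section {α β : Type*} [MeasurableSpace α] [MeasurableSpace β]
    (K : Kernel Ω β) [IsSFiniteKernel K] {f : α → Ω} (hf : Measurable f) {S : Set (α × β)}
    (hS : MeasurableSet S) : Measurable fun a => K (f a) {z | (a, z) ∈ S} :=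
  Kernel.measurable_kernel_prodMk_left (κ := K.comap f hf) hS

/-- A kernel of locally finite measures that is equivariant under the flow for every `ω`, not just
almost surely. -/
structure IsPerfect {d : ℕ} (θ : Rd d → Ω → Ω) (K : Kernel Ω (Rd d)) : Prop where
  lf : ∀ ω, IsLocallyFiniteMeasure (K ω)
  inv : ∀ x ω, K (θ x ω) = (K ω).map (fun y => y - x)

lemma iUnion_closedBall_nat_eq (d : ℕ) :
    ⋃ n : ℕ, Metric.closedBall (0 : Rd d) n = univ := Metric.iUnion_closedBall_nat 0

lemma isSFiniteKernel_of_locallyFinite {d : ℕ} {K : Kernel Ω (Rd d)}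
    (h : ∀ ω, IsLocallyFiniteMeasure (K ω)) : IsSFiniteKernel K :=
  isSFiniteKernel_of_cover K (fun n : ℕ => Metric.closedBall 0 n)
    (fun _ => Metric.isClosed_closedBall.measurableSet) (iUnion_closedBall_nat_eq d)
    (fun a n => by have := h a; exact (isCompact_closedBall _ _).measure_lt_top)

lemma IsPerfect.sfinite {d : ℕ} {θ : Rd d → Ω → Ω} {K : Kernel Ω (Rd d)} (h : IsPerfect θ K) :
    IsSFiniteKernel K := isSFiniteKernel_of_locallyFinite h.lf

lemma IsPerfect.sigmaFinite {d : ℕ} {θ : Rd d → Ω → Ω} {K : Kernel Ω (Rd d)}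
    (h : IsPerfect θ K) (ω : Ω) : SigmaFinite (K ω) := by
  have := h.lf ω
  infer_instance

lemma map_sub_apply {d : ℕ} (μ : Measure (Rd d)) (x : Rd d) (B : Set (Rd d)) :
    μ.map (fun y => y - x) B = μ {y | y - x ∈ B} :=
  (MeasurableEquiv.subRight x).map_apply B

lemma IsPerfect.apply {d : ℕ} {θ : Rd d → Ω → Ω} {K : Kernel Ω (Rd d)} (h : IsPerfect θ K)
    (x : Rd d) (ω : Ω) (B : Set (Rd d)) : K (θ x ω) B = K ω {y | y - x ∈ B} := by
  rw [h.inv, map_sub_apply]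

/-- Undoing the shift: the mass of `B`, seen from the shifted configuration. -/
lemma IsPerfect.apply_add {d : ℕ} {θ : Rd d → Ω → Ω} {K : Kernel Ω (Rd d)} (h : IsPerfect θ K)
    (x : Rd d) (ω : Ω) (B : Set (Rd d)) : K ω B = K (θ x ω) {y | y + x ∈ B} := by
  rw [h.apply]
  simp

/-- The set of points carrying an atom is countable. -/
lemma countable_atoms {d : ℕ} (μ : Measure (Rd d)) [SigmaFinite μ] :
    {y | 0 < μ {y}}.Countable :=
  Measure.countable_meas_pos_of_disjoint_iUnion (μ := μ) (As := fun y => {y})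
    (fun _ => measurableSet_singleton _)
    (fun x y hxy => by simpa [Function.onFun] using hxy)

/-! ### Transport of a diffuse finite measure into another finite measure -/

lemma continuous_real_Iic (μ : Measure ℝ) [IsFiniteMeasure μ] (hμ : ∀ x, μ {x} = 0) :
    Continuous fun t => μ.real (Iic t) := by
  have : NullSingletonClass μ := ⟨fun x => hμ x⟩
  rw [continuous_iff_continuousAt]
  intro t
  have h0 : Tendsto (fun u => μ.real (Icc (t - |u - t|) (t + |u - t|))) (𝓝 t) (𝓝 0) := by
    have h1 : Tendsto (fun u : ℝ => |u - t|) (𝓝 t) (𝓝 0) := by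
      have : Continuous fun u : ℝ => |u - t| := by fun_prop
      simpa using this.tendsto t
    have h2 := (tendsto_measure_Icc μ t).comp h1
    have h3 := (ENNReal.tendsto_toReal (a := 0) (by simp)).comp h2
    simpa [Measure.real, Function.comp_def] using h3
  rw [ContinuousAt, tendsto_iff_dist_tendsto_zero]
  refine squeeze_zero (fun _ => dist_nonneg) (fun u => ?_) h0
  rw [Real.dist_eq, abs_sub_le_iff]
  constructor
  · rw [sub_le_iff_le_add]
    refine le_trans (measureReal_mono ?_) (measureReal_union_le _ _)
    intro z hz
    by_cases h : z ≤ t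
    · exact Or.inr h
    · left
      have hz' : z ≤ u := hz
      push Not at h
      constructor
      · linarith [abs_nonneg (u - t)]
      · linarith [le_abs_self (u - t)]
  · rw [sub_le_iff_le_add]
    refine le_trans (measureReal_mono ?_) (measureReal_union_le _ _)
    intro z hz
    by_cases h : z ≤ u
    · exact Or.inr h
    · left
      have hz' : z ≤ t := hz
      push Not at h
      constructor
      · linarith [neg_abs_le (u - t)]
      · linarith [abs_nonneg (u - t)]

/-- The distribution function of a diffuse finite measure `μ` on the line maps `μ` to Lebesgue
measure on `[0, μ(ℝ)]`. -/
lemma map_real_Iic (μ : Measure ℝ) [IsFiniteMeasure μ] (hμ : ∀ x, μ {x} = 0) :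
    μ.map (fun t => μ.real (Iic t)) = volume.restrict (Icc 0 (μ.real univ)) := by
  set G : ℝ → ℝ := fun t => μ.real (Iic t) with hG
  have hcont : Continuous G := continuous_real_Iic μ hμ
  have hmono : Monotone G := fun a b hab => measureReal_mono (Iic_subset_Iic.2 hab)
  have hlevel : ∀ s, 0 < s → s < μ.real univ → ∃ t, G t = s := by
    intro s hs0 hsm
    have hbot : Tendsto G atBot (𝓝 0) := by
      have h' : Tendsto (fun t => μ (Iic t)) atBot (𝓝 0) := by
        have h := tendsto_measure_iInter_atBot (μ := μ) (s := fun t : ℝ => Iic t)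
          (fun t => measurableSet_Iic.nullMeasurableSet) monotone_Iic ⟨0, measure_ne_top _ _⟩
        have he : ⋂ t : ℝ, Iic t = ∅ := by
          ext z
          simp only [mem_iInter, mem_Iic, mem_empty_iff_false, iff_false, not_forall, not_le]
          exact exists_lt z
        rwa [he, measure_empty] at h
      have h := (ENNReal.tendsto_toReal (a := 0) (by simp)).comp h'
      simpa [hG, Measure.real, Function.comp_def] using h
    have htop : Tendsto G atTop (𝓝 (μ.real univ)) := by
      have h := (ENNReal.tendsto_toReal (a := μ univ) (by simp)).comp (tendsto_measure_Iic_atTop μ)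
      simpa [hG, Measure.real, Function.comp_def] using h
    obtain ⟨a, ha⟩ := (hbot.eventually (gt_mem_nhds hs0)).exists
    obtain ⟨b, hb⟩ := (htop.eventually (lt_mem_nhds hsm)).exists
    exact mem_range_of_exists_le_of_exists_ge hcont ⟨a, ha.le⟩ ⟨b, hb.le⟩
  refine Measure.ext_of_Iic _ _ fun a => ?_
  rw [Measure.map_apply hcont.measurable measurableSet_Iic, Measure.restrict_apply measurableSet_Iic]
  have hGnn : ∀ t, 0 ≤ G t := fun t => measureReal_nonneg
  have hGle : ∀ t, G t ≤ μ.real univ := fun t => measureReal_mono (subset_univ _)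
  rcases lt_or_ge a 0 with ha | ha
  · have h1 : G ⁻¹' Iic a = ∅ := by
      ext t
      simp only [mem_preimage, mem_Iic, mem_empty_iff_false, iff_false, not_le]
      exact ha.trans_le (hGnn t)
    have h2 : Iic a ∩ Icc 0 (μ.real univ) = ∅ := by
      ext t
      simp only [mem_inter_iff, mem_Iic, mem_Icc, mem_empty_iff_false, iff_false]
      rintro ⟨h, h', -⟩
      linarith
    simp [h1, h2]
  rcases le_or_gt (μ.real univ) a with ham | ham
  · have h1 : G ⁻¹' Iic a = univ := by
      ext t
      simpa using (hGle t).trans ham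
    have h2 : Iic a ∩ Icc 0 (μ.real univ) = Icc 0 (μ.real univ) := by
      rw [inter_eq_right]
      exact fun t ht => ht.2.trans ham
    simp [h1, h2]
  · have h2 : Iic a ∩ Icc 0 (μ.real univ) = Icc 0 a := by
      ext t
      simp only [mem_inter_iff, mem_Iic, mem_Icc]
      constructor
      · rintro ⟨h, h', -⟩; exact ⟨h', h⟩
      · rintro ⟨h, h'⟩; exact ⟨h', h, h'.trans ham.le⟩
    rw [h2, Real.volume_Icc, sub_zero]
    have key : μ.real (G ⁻¹' Iic a) = a := by
      apply le_antisymm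
      · refine le_of_forall_gt_imp_ge_of_dense fun s hs => ?_
        rcases le_or_gt (μ.real univ) s with hsm | hsm
        · exact (measureReal_mono (subset_univ _)).trans hsm
        · obtain ⟨t, ht⟩ := hlevel s (ha.trans_lt hs) hsm
          rw [← ht]
          refine measureReal_mono fun u hu => ?_
          by_contra hut
          have h3 : t ≤ u := le_of_not_ge hut
          have h4 : G u ≤ a := hu
          linarith [hmono h3]
      · rcases ha.eq_or_lt with h0 | h0
        · rw [← h0]; exact measureReal_nonneg
        · obtain ⟨t, ht⟩ := hlevel a h0 ham
          calc a = G t := ht.symm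
            _ ≤ _ := measureReal_mono fun u hu => by
              change G u ≤ a
              rw [← ht]; exact hmono hu
    rw [← ofReal_measureReal (μ := μ) (s := G ⁻¹' Iic a), key]

/-- The same after transferring a measure on `ℝ^d` to the line by a Borel embedding `e`. -/
lemma map_real_embedding {d : ℕ} (μ : Measure (Rd d)) [IsFiniteMeasure μ] (hμ : ∀ x, μ {x} = 0)
    {e : Rd d → ℝ} (he : MeasurableEmbedding e) :
    μ.map (fun x => μ.real {z | e z ≤ e x}) = volume.restrict (Icc 0 (μ.real univ)) := by
  have hfin : IsFiniteMeasure (μ.map e) := inferInstance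
  have hat : ∀ t, (μ.map e) {t} = 0 := fun t => by
    rw [he.map_apply]
    by_cases h : ∃ x, e x = t
    · obtain ⟨x, rfl⟩ := h
      have : e ⁻¹' {e x} = {x} := by
        ext y; simp [he.injective.eq_iff]
      rw [this, hμ]
    · have : e ⁻¹' {t} = ∅ := by
        ext y; simp only [mem_preimage, mem_singleton_iff, mem_empty_iff_false, iff_false]
        exact fun hy => h ⟨y, hy⟩
      rw [this, measure_empty]
  have h1 := map_real_Iic (μ.map e) hat
  have h2 : (μ.map e).real univ = μ.real univ := by
    simp [Measure.real, he.map_apply]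
  have h3 : ∀ t, (μ.map e).real (Iic t) = μ.real {z | e z ≤ t} := fun t => by
    simp only [Measure.real, he.map_apply]
    rfl
  rw [h2, Measure.map_map (continuous_real_Iic _ hat).measurable he.measurable] at h1
  rw [← h1]
  congr 1
  ext x
  simp [h3]

/-- The law of a measurable map on the unit interval, computed after stretching the interval to
length `n`. -/
lemma volume_stretch {β : Type*} [MeasurableSpace β] {f : unitInterval → β} (hf : Measurable f)
    {n : ℝ} (hn : 0 < n) {B : Set β} (hB : MeasurableSet B) :
    volume ({t : ℝ | f (projIcc 0 1 zero_le_one (t / n)) ∈ B} ∩ Icc 0 n) =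
      ENNReal.ofReal n * (volume.map f) B := by
  have hset : {t : ℝ | f (projIcc 0 1 zero_le_one (t / n)) ∈ B} ∩ Icc 0 n =
      n • (Subtype.val '' (f ⁻¹' B) : Set ℝ) := by
    ext t
    rw [mem_smul_set_iff_inv_smul_mem₀ hn.ne']
    simp only [smul_eq_mul, mem_inter_iff, mem_ofPred_eq, mem_image, mem_preimage]
    constructor
    · rintro ⟨h1, h2⟩
      have hmem : t / n ∈ Icc (0 : ℝ) 1 :=
        ⟨div_nonneg h2.1 hn.le, (div_le_one hn).2 h2.2⟩
      refine ⟨_, h1, ?_⟩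
      rw [projIcc_of_mem _ hmem]
      simp [div_eq_inv_mul]
    · rintro ⟨u, hu, hut⟩
      have ht : t / n = u := by rw [hut, div_eq_inv_mul]
      refine ⟨?_, ?_⟩
      · rw [ht, projIcc_val]; exact hu
      · have h0 := u.2.1
        have h1 := u.2.2
        rw [← ht] at h0 h1
        refine ⟨?_, (div_le_one hn).1 h1⟩
        by_contra hneg
        push Not at hneg
        linarith [div_neg_of_neg_of_pos hneg hn]
  rw [hset, Measure.addHaar_smul, Measure.map_apply hf hB]
  congr 1
  · simp [abs_of_pos hn]
  · rw [unitInterval.volume_def, Measure.comap_apply _ Subtype.val_injective _ _ (hf hB)]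
    exact fun s hs => measurableSet_Icc.subtype_image hs

/-- Measurably in the parameter `a`, the diffuse measure `μ a` is transported, on a part `D` of the
space, into a measure below `ν a`; either all of `μ a` is used, or `ν a` is exhausted. -/
lemma exists_local_transport {α : Type*} [MeasurableSpace α] {d : ℕ} (μ ν : Kernel α (Rd d))
    (hμ : ∀ a, IsFiniteMeasure (μ a)) (hν : ∀ a, IsFiniteMeasure (ν a))
    (hdiff : ∀ a x, μ a {x} = 0) :
    ∃ (D : Set (α × Rd d)) (g : α × Rd d → Rd d), MeasurableSet D ∧ Measurable g ∧
      (∀ a B, MeasurableSet B → μ a {x | (a, x) ∈ D ∧ g (a, x) ∈ B} ≤ ν a B) ∧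
      ∀ a, μ a {x | (a, x) ∉ D} = 0 ∨
        ∀ B, MeasurableSet B → ν a B ≤ μ a {x | (a, x) ∈ D ∧ g (a, x) ∈ B} := by
  classical
  obtain ⟨e, he⟩ := exists_measurableEmbedding_real (Rd d)
  have : IsSFiniteKernel μ := isSFiniteKernel_of_cover μ (fun _ => univ)
    (fun _ => MeasurableSet.univ) (iUnion_const univ) (fun a n => by have := hμ a; exact measure_lt_top _ _)
  -- the normalisation of `ν`, with a dummy value where `ν a = 0`
  let νbar : Kernel α (Rd d) :=
    { toFun := fun a => if ν a univ = 0 then Measure.dirac 0 else (ν a univ)⁻¹ • ν a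
      measurable' := by
        have hu : Measurable fun a => ν a univ := ν.measurable_coe MeasurableSet.univ
        refine Measurable.ite (hu (measurableSet_singleton 0)) measurable_const ?_
        refine Measure.measurable_of_measurable_coe _ fun s hs => ?_
        simp only [Measure.smul_apply, smul_eq_mul]
        exact hu.inv.mul (ν.measurable_coe hs) }
  have hνbar : ∀ a, νbar a = if ν a univ = 0 then Measure.dirac 0 else (ν a univ)⁻¹ • ν a :=
    fun a => rfl
  have hmarkov : IsMarkovKernel νbar := ⟨fun a => by
    rw [hνbar]
    split_ifs with h
    · infer_instance
    · have := hν a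
      refine ⟨?_⟩
      rw [Measure.smul_apply, smul_eq_mul]
      exact ENNReal.inv_mul_cancel h (measure_ne_top _ _)⟩
  obtain ⟨f, hf, hfmap⟩ := Kernel.exists_measurable_map_eq_unitInterval νbar
  let n : α → ℝ := fun a => (ν a).real univ
  have hn : Measurable n := (ν.measurable_coe MeasurableSet.univ).ennreal_toReal
  let F : α × Rd d → ℝ := fun p => (μ p.1).real {z | e z ≤ e p.2}
  have hF : Measurable F := by
    refine Measurable.ennreal_toReal ?_
    refine measurable_kernel_section μ (f := fun p : α × Rd d => p.1) measurable_fst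
      (S := {q : (α × Rd d) × Rd d | e q.2 ≤ e q.1.2}) ?_
    exact measurableSet_le (he.measurable.comp measurable_snd)
      (he.measurable.comp (measurable_snd.comp measurable_fst))
  refine ⟨{p | 0 < n p.1 ∧ F p ≤ n p.1},
    fun p => f p.1 (projIcc 0 1 zero_le_one (F p / n p.1)), ?_, ?_, ?_, ?_⟩
  · exact (measurableSet_lt measurable_const (hn.comp measurable_fst)).inter
      (measurableSet_le hF (hn.comp measurable_fst))
  · exact hf.comp (measurable_fst.prodMk
      ((continuous_projIcc (h := zero_le_one)).measurable.comp (hF.div (hn.comp measurable_fst))))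
  all_goals have hfa : ∀ a, Measurable (f a) := fun a => hf.comp measurable_prodMk_left
  all_goals have hFa : ∀ a, Measurable fun x => F (a, x) := fun a => hF.comp measurable_prodMk_left
  all_goals
    have hset : ∀ a, 0 < n a → ∀ B, MeasurableSet B →
        μ a {x | (a, x) ∈ {p : α × Rd d | 0 < n p.1 ∧ F p ≤ n p.1} ∧
          f a (projIcc 0 1 zero_le_one (F (a, x) / n a)) ∈ B} =
        volume ({t : ℝ | t ≤ n a ∧ f a (projIcc 0 1 zero_le_one (t / n a)) ∈ B} ∩
          Icc 0 ((μ a).real univ)) := by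
      intro a ha B hB
      have := hμ a
      have hmeas : MeasurableSet
          {t : ℝ | t ≤ n a ∧ f a (projIcc 0 1 zero_le_one (t / n a)) ∈ B} := by
        refine (measurableSet_le measurable_id measurable_const).inter ?_
        exact (hfa a).comp (continuous_projIcc.measurable.comp (measurable_id.div_const _)) hB
      rw [← Measure.restrict_apply hmeas, ← map_real_embedding (μ a) (hdiff a) he,
        Measure.map_apply (hFa a) hmeas]
      congr 1
      ext x
      simp [F, ha]
    have hν' : ∀ a, 0 < n a → ∀ B, MeasurableSet B → ν a B =
        volume ({t : ℝ | f a (projIcc 0 1 zero_le_one (t / n a)) ∈ B} ∩ Icc 0 (n a)) := by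
      intro a ha B hB
      have := hν a
      have h0 : ν a univ ≠ 0 := fun h => by simp [n, Measure.real, h] at ha
      rw [volume_stretch (hfa a) ha hB, hfmap, hνbar, if_neg h0, Measure.smul_apply, smul_eq_mul,
        ofReal_measureReal, ← mul_assoc, ENNReal.mul_inv_cancel h0 (measure_ne_top _ _), one_mul]
  · intro a B hB
    rcases (measureReal_nonneg : 0 ≤ n a).eq_or_lt with h0 | h0
    · have : {x | (a, x) ∈ {p : α × Rd d | 0 < n p.1 ∧ F p ≤ n p.1} ∧
          f a (projIcc 0 1 zero_le_one (F (a, x) / n a)) ∈ B} = ∅ := by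
        ext x
        have h0' : n a = 0 := h0.symm
        simp [h0']
      rw [this, measure_empty]
      exact zero_le
    · rw [hset a h0 B hB, hν' a h0 B hB]
      exact measure_mono fun t ht => ⟨ht.1.2, ht.2.1, ht.1.1⟩
  · intro a
    have := hμ a
    have := hν a
    rcases (measureReal_nonneg : 0 ≤ n a).eq_or_lt with h0 | h0
    · right
      intro B hB
      have : ν a univ = 0 := by
        simpa [n, Measure.real, ENNReal.toReal_eq_zero_iff] using h0.symm
      rw [measure_mono_null (subset_univ B) this]
      exact zero_le
    rcases le_or_gt (n a) ((μ a).real univ) with hm | hm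
    · right
      intro B hB
      rw [hset a h0 B hB, hν' a h0 B hB]
      exact measure_mono fun t ht => ⟨⟨ht.2.2, ht.1⟩, ht.2.1, ht.2.2.trans hm⟩
    · left
      have : {x | (a, x) ∉ {p : α × Rd d | 0 < n p.1 ∧ F p ≤ n p.1}} = ∅ := by
        ext x
        simp only [mem_ofPred_eq, mem_empty_iff_false, iff_false, not_not]
        exact ⟨h0, (measureReal_mono (subset_univ _)).trans hm.le⟩
      rw [this, measure_empty]

/-! ### Partial allocations, what they leave over, and mass transport -/

/-- A partial allocation: the map `g`, considered on its domain `D` of allocated sites only, is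
equivariant for every `ω`. Sites outside `D` correspond to the value `∞`. -/
structure IsPartialAlloc {d : ℕ} (θ : Rd d → Ω → Ω) (D : Set (Ω × Rd d))
    (g : Ω × Rd d → Rd d) : Prop where
  measD : MeasurableSet D
  measg : Measurable g
  dom : ∀ ω x y, (θ y ω, x - y) ∈ D ↔ (ω, x) ∈ D
  equiv : ∀ ω x y, (ω, x) ∈ D → g (θ y ω, x - y) = g (ω, x) - y

lemma IsPerfect.exists_restrict {d : ℕ} {θ : Rd d → Ω → Ω} {K : Kernel Ω (Rd d)}
    (hK : IsPerfect θ K) {D : Set (Ω × Rd d)} (hD : MeasurableSet D)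
    (hdom : ∀ ω x y, (θ y ω, x - y) ∈ D ↔ (ω, x) ∈ D) :
    ∃ K' : Kernel Ω (Rd d), IsPerfect θ K' ∧ ∀ ω, K' ω = (K ω).restrict {x | (ω, x) ∈ D} := by
  have := hK.sfinite
  have hDω : ∀ ω, MeasurableSet {x | (ω, x) ∈ D} := fun ω => measurable_prodMk_left hD
  refine ⟨⟨fun ω => (K ω).restrict {x | (ω, x) ∈ D}, ?_⟩, ⟨?_, ?_⟩, fun ω => rfl⟩
  · refine Measure.measurable_of_measurable_coe _ fun s hs => ?_
    simp_rw [Measure.restrict_apply hs]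
    exact measurable_kernel_section K (f := id) measurable_id
      (S := {p : Ω × Rd d | p.2 ∈ s ∧ p ∈ D}) ((measurable_snd hs).inter hD)
  · intro ω
    have := hK.lf ω
    change IsLocallyFiniteMeasure ((K ω).restrict _)
    infer_instance
  · intro x ω
    change (K (θ x ω)).restrict {z | (θ x ω, z) ∈ D} =
      ((K ω).restrict {z | (ω, z) ∈ D}).map (fun y => y - x)
    ext B hB
    rw [map_sub_apply, Measure.restrict_apply hB, Measure.restrict_apply' (hDω ω), hK.apply]
    congr 1
    ext z
    simp [hdom]

lemma sub_apply_eq_tsum {d : ℕ} {L Z : Measure (Rd d)} [IsLocallyFiniteMeasure Z] (h : Z ≤ L)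
    {B : Set (Rd d)} (hB : MeasurableSet B) {A : ℕ → Set (Rd d)} (hA : ∀ n, MeasurableSet (A n))
    (hdisj : Pairwise (Function.onFun Disjoint A)) (hcov : ⋃ n, A n = univ)
    (hfin : ∀ n, Z (A n) < ∞) : (L - Z) B = ∑' n, (L (B ∩ A n) - Z (B ∩ A n)) := by
  have h1 : (L - Z) B = ∑' n, (L - Z) (B ∩ A n) := by
    rw [← measure_iUnion, ← inter_iUnion, hcov, inter_univ]
    · exact fun i j hij => (hdisj hij).mono inter_subset_right inter_subset_right
    · exact fun n => hB.inter (hA n)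
  rw [h1]
  congr 1
  ext n
  rw [← Measure.restrict_apply hB, Measure.restrict_sub_eq_restrict_sub_restrict (hA n)]
  have : IsFiniteMeasure (Z.restrict (A n)) := ⟨by simpa using hfin n⟩
  rw [Measure.sub_apply hB (Measure.restrict_mono_measure h _), Measure.restrict_apply hB,
    Measure.restrict_apply hB]

lemma sub_add_cancel_of_locallyFinite {d : ℕ} {L Z : Measure (Rd d)} [IsLocallyFiniteMeasure Z]
    (h : Z ≤ L) {A : ℕ → Set (Rd d)} (hA : ∀ n, MeasurableSet (A n))
    (hdisj : Pairwise (Function.onFun Disjoint A)) (hcov : ⋃ n, A n = univ)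
    (hfin : ∀ n, Z (A n) < ∞) : L - Z + Z = L := by
  ext B hB
  have h2 : ∀ μ : Measure (Rd d), μ B = ∑' n, μ (B ∩ A n) := fun μ => by
    rw [← measure_iUnion, ← inter_iUnion, hcov, inter_univ]
    · exact fun i j hij => (hdisj hij).mono inter_subset_right inter_subset_right
    · exact fun n => hB.inter (hA n)
  rw [Measure.add_apply, sub_apply_eq_tsum h hB hA hdisj hcov hfin, h2 Z, h2 L, ← ENNReal.tsum_add]
  congr 1
  ext n
  exact tsub_add_cancel_of_le (h _)

/-- The part of the destination `L` not yet served by a partial allocation is again a perfect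
kernel. -/
lemma exists_remainder {d : ℕ} {θ : Rd d → Ω → Ω} {K L : Kernel Ω (Rd d)}
    (hK : IsPerfect θ K) (hL : IsPerfect θ L) {D : Set (Ω × Rd d)} {g : Ω × Rd d → Rd d}
    (hg : IsPartialAlloc θ D g)
    (hle : ∀ ω B, MeasurableSet B → K ω {x | (ω, x) ∈ D ∧ g (ω, x) ∈ B} ≤ L ω B) :
    ∃ L' : Kernel Ω (Rd d), IsPerfect θ L' ∧ ∀ ω B, MeasurableSet B →
      L ω B = L' ω B + K ω {x | (ω, x) ∈ D ∧ g (ω, x) ∈ B} := by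
  have := hK.sfinite
  have hDω : ∀ ω, MeasurableSet {x | (ω, x) ∈ D} := fun ω => measurable_prodMk_left hg.measD
  have hgω : ∀ ω, Measurable fun x => g (ω, x) := fun ω => hg.measg.comp measurable_prodMk_left
  let Z : Ω → Measure (Rd d) := fun ω =>
    ((K ω).restrict {x | (ω, x) ∈ D}).map (fun x => g (ω, x))
  have hZ : ∀ ω B, MeasurableSet B → Z ω B = K ω {x | (ω, x) ∈ D ∧ g (ω, x) ∈ B} := by
    intro ω B hB
    simp only [Z]
    rw [Measure.map_apply (hgω ω) hB, Measure.restrict_apply (hgω ω hB)]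
    congr 1
    ext x
    simp [and_comm]
  have hZL : ∀ ω, Z ω ≤ L ω := fun ω => Measure.le_iff.2 fun B hB => by
    rw [hZ ω B hB]; exact hle ω B hB
  have hLlf := hL.lf
  have hZlf : ∀ ω, IsLocallyFiniteMeasure (Z ω) := fun ω =>
    Measure.isLocallyFiniteMeasure_of_le (hZL ω)
  have hZmeas : ∀ B, MeasurableSet B → Measurable fun ω => Z ω B := fun B hB => by
    simp_rw [hZ _ B hB]
    exact measurable_kernel_section K (f := id) measurable_id
      (S := {p : Ω × Rd d | p ∈ D ∧ g p ∈ B}) (hg.measD.inter (hg.measg hB))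
  have hZinv : ∀ x ω, Z (θ x ω) = (Z ω).map (fun y => y - x) := by
    intro x ω
    ext B hB
    have hB' : MeasurableSet {y : Rd d | y - x ∈ B} := (measurable_id.sub_const x) hB
    rw [map_sub_apply, hZ _ _ hB, hZ _ _ hB', hK.apply]
    congr 1
    ext z
    simp only [mem_ofPred_eq, hg.dom]
    constructor
    · rintro ⟨h1, h2⟩; exact ⟨h1, by rwa [hg.equiv _ _ _ h1] at h2⟩
    · rintro ⟨h1, h2⟩; exact ⟨h1, by rwa [hg.equiv _ _ _ h1]⟩
  let A : ℕ → Set (Rd d) := disjointed fun n : ℕ => Metric.closedBall 0 n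
  have hA : ∀ n, MeasurableSet (A n) :=
    MeasurableSet.disjointed fun n => Metric.isClosed_closedBall.measurableSet
  have hdisj : Pairwise (Function.onFun Disjoint A) := disjoint_disjointed _
  have hcov : ⋃ n, A n = univ := by
    simp only [A]
    rw [iUnion_disjointed, iUnion_closedBall_nat_eq]
  have hfin : ∀ ω n, Z ω (A n) < ∞ := fun ω n =>
    (measure_mono (disjointed_subset _ n)).trans_lt
      (by have := hZlf ω; exact (isCompact_closedBall _ _).measure_lt_top)
  have hadd : ∀ ω, L ω - Z ω + Z ω = L ω := fun ω =>
    sub_add_cancel_of_locallyFinite (hZL ω) hA hdisj hcov (hfin ω)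
  refine ⟨⟨fun ω => L ω - Z ω, ?_⟩, ⟨?_, ?_⟩, ?_⟩
  · refine Measure.measurable_of_measurable_coe _ fun s hs => ?_
    simp_rw [fun ω => sub_apply_eq_tsum (hZL ω) hs hA hdisj hcov (hfin ω)]
    exact Measurable.tsum fun n =>
      (L.measurable_coe (hs.inter (hA n))).sub (hZmeas _ (hs.inter (hA n)))
  · exact fun ω => Measure.isLocallyFiniteMeasure_of_le (Measure.sub_le (μ := L ω) (ν := Z ω))
  · intro x ω
    change L (θ x ω) - Z (θ x ω) = (L ω - Z ω).map (fun y => y - x)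
    have hZlf' := hZlf (θ x ω)
    rw [← Measure.add_right_inj (Z (θ x ω)), add_comm, hadd]
    rw [hZinv, add_comm, ← Measure.map_add _ _ (by fun_prop : Measurable fun y : Rd d => y - x), hadd, hL.inv]
  · intro ω B hB
    change L ω B = (L ω - Z ω) B + _
    rw [← hZ ω B hB, ← Measure.add_apply, hadd]

/-- **Mass transport**: on average, as much mass is sent out of the set `Q` as is received in it. -/
lemma mass_transport {d : ℕ} {θ : Rd d → Ω → Ω} (P : Measure Ω) [IsProbabilityMeasure P]
    (hflow : IsMeasurableFlow θ) (hstat : IsStationary P θ) {K : Kernel Ω (Rd d)}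
    (hK : IsPerfect θ K) {D : Set (Ω × Rd d)} {g : Ω × Rd d → Rd d} (hg : IsPartialAlloc θ D g)
    {Q : Set (Rd d)} (hQ : MeasurableSet Q) (hQ0 : volume Q ≠ 0) (hQ1 : volume Q ≠ ∞) :
    ∫⁻ ω, K ω {x | (ω, x) ∈ D ∧ x ∈ Q} ∂P = ∫⁻ ω, K ω {x | (ω, x) ∈ D ∧ g (ω, x) ∈ Q} ∂P := by
  have := hK.sfinite
  have hlK := hK.sigmaFinite
  -- the mass sent from `Q` to `Q + y`, as a function of `y`
  let S : Set ((Ω × Rd d) × Rd d) := {p | (p.1.1, p.2) ∈ D ∧ p.2 ∈ Q ∧ g (p.1.1, p.2) - p.1.2 ∈ Q}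
  have hS : MeasurableSet S := by
    have h1 : Measurable fun p : (Ω × Rd d) × Rd d => (p.1.1, p.2) := by fun_prop
    refine (h1 hg.measD).inter ((measurable_snd hQ).inter ?_)
    exact ((hg.measg.comp h1).sub (measurable_snd.comp measurable_fst)) hQ
  let S' : Set ((Ω × Rd d) × Rd d) := {p | (p.1.1, p.2) ∈ D ∧ p.2 + p.1.2 ∈ Q ∧ g (p.1.1, p.2) ∈ Q}
  have hSsec : MeasurableSet S' := by
    have h1 : Measurable fun p : (Ω × Rd d) × Rd d => (p.1.1, p.2) := by fun_prop
    have h2 : Measurable fun p : (Ω × Rd d) × Rd d => p.2 + p.1.2 := by fun_prop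
    exact (h1 hg.measD).inter ((h2 hQ).inter ((hg.measg.comp h1) hQ))
  let F : Ω → Rd d → ℝ≥0∞ := fun ω y => K ω {x | ((ω, y), x) ∈ S}
  let F' : Ω → Rd d → ℝ≥0∞ := fun ω y => K ω {x | ((ω, y), x) ∈ S'}
  have hF : Measurable (Function.uncurry F) := measurable_kernel_section K measurable_fst hS
  have hF' : Measurable (Function.uncurry F') := measurable_kernel_section K measurable_fst hSsec
  -- integrating over `y` and using Tonelli gives `volume Q` times the two sides
  have key1 : ∀ ω, ∫⁻ y, F ω y = K ω {x | (ω, x) ∈ D ∧ x ∈ Q} * volume Q := by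
    intro ω
    have hSω : MeasurableSet {q : Rd d × Rd d | ((ω, q.1), q.2) ∈ S} :=
      (by fun_prop : Measurable fun q : Rd d × Rd d => ((ω, q.1), q.2)) hS
    have h1 := Measure.prod_apply (μ := volume) (ν := K ω) hSω
    rw [Measure.prod_apply_symm hSω] at h1
    refine h1.symm.trans ?_
    have hm : MeasurableSet {x | (ω, x) ∈ D ∧ x ∈ Q} :=
      (measurable_prodMk_left hg.measD).inter hQ
    have h2 : ∀ x, volume ((fun y => (y, x)) ⁻¹' {q : Rd d × Rd d | ((ω, q.1), q.2) ∈ S}) =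
        {x | (ω, x) ∈ D ∧ x ∈ Q}.indicator (fun _ => volume Q) x := by
      intro x
      by_cases hx : x ∈ {x | (ω, x) ∈ D ∧ x ∈ Q}
      · rw [indicator_of_mem hx]
        have : (fun y => (y, x)) ⁻¹' {q : Rd d × Rd d | ((ω, q.1), q.2) ∈ S} =
            (fun y => g (ω, x) - y) ⁻¹' Q := by
          ext y; simp [S, hx.1, hx.2]
        rw [this, (Measure.measurePreserving_sub_left volume (g (ω, x))).measure_preimage
          hQ.nullMeasurableSet]
      · rw [indicator_of_notMem hx]
        have : (fun y => (y, x)) ⁻¹' {q : Rd d × Rd d | ((ω, q.1), q.2) ∈ S} = ∅ := by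
          ext y
          simp only [S, mem_preimage, mem_ofPred_eq, mem_empty_iff_false, iff_false]
          exact fun h => hx ⟨h.1, h.2.1⟩
        rw [this, measure_empty]
    simp_rw [h2]
    rw [lintegral_indicator_const hm, mul_comm]
  have key2 : ∀ ω, ∫⁻ y, F' ω y = K ω {x | (ω, x) ∈ D ∧ g (ω, x) ∈ Q} * volume Q := by
    intro ω
    have hSω : MeasurableSet {q : Rd d × Rd d | ((ω, q.1), q.2) ∈ S'} :=
      (by fun_prop : Measurable fun q : Rd d × Rd d => ((ω, q.1), q.2)) hSsec
    have h1 := Measure.prod_apply (μ := volume) (ν := K ω) hSω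
    rw [Measure.prod_apply_symm hSω] at h1
    refine h1.symm.trans ?_
    have hm : MeasurableSet {x | (ω, x) ∈ D ∧ g (ω, x) ∈ Q} :=
      (measurable_prodMk_left hg.measD).inter ((hg.measg.comp measurable_prodMk_left) hQ)
    have h2 : ∀ x, volume ((fun y => (y, x)) ⁻¹' {q : Rd d × Rd d | ((ω, q.1), q.2) ∈ S'}) =
        {x | (ω, x) ∈ D ∧ g (ω, x) ∈ Q}.indicator (fun _ => volume Q) x := by
      intro x
      by_cases hx : x ∈ {x | (ω, x) ∈ D ∧ g (ω, x) ∈ Q}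
      · rw [indicator_of_mem hx]
        have : (fun y => (y, x)) ⁻¹' {q : Rd d × Rd d | ((ω, q.1), q.2) ∈ S'} =
            (fun y => x + y) ⁻¹' Q := by
          ext y; simp [S', hx.1, hx.2]
        rw [this, measure_preimage_add]
      · rw [indicator_of_notMem hx]
        have : (fun y => (y, x)) ⁻¹' {q : Rd d × Rd d | ((ω, q.1), q.2) ∈ S'} = ∅ := by
          ext y
          simp only [S', mem_preimage, mem_ofPred_eq, mem_empty_iff_false, iff_false]
          exact fun h => hx ⟨h.1, h.2.2⟩
        rw [this, measure_empty]
    simp_rw [h2]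
    rw [lintegral_indicator_const hm, mul_comm]
  -- shifting by `y` exchanges the two pictures
  have hshift : ∀ y ω, F' (θ y ω) y = F ω y := by
    intro y ω
    simp only [F, F']
    rw [hK.apply]
    congr 1
    ext x
    simp only [S, S', mem_ofPred_eq, hg.dom, sub_add_cancel]
    constructor
    · rintro ⟨h1, h2, h3⟩; exact ⟨h1, h2, by rwa [hg.equiv _ _ _ h1] at h3⟩
    · rintro ⟨h1, h2, h3⟩; exact ⟨h1, h2, by rwa [hg.equiv _ _ _ h1]⟩
  have hθ : ∀ y, Measurable (θ y) := fun y => hflow.measurable.comp measurable_prodMk_left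
  have hstep : ∀ y, ∫⁻ ω, F ω y ∂P = ∫⁻ ω, F' ω y ∂P := by
    intro y
    have hm : Measurable fun ω => F' ω y := hF'.comp measurable_prodMk_right
    conv_rhs => rw [← hstat y, lintegral_map hm (hθ y)]
    simp_rw [hshift]
  have hmain : (∫⁻ ω, K ω {x | (ω, x) ∈ D ∧ x ∈ Q} ∂P) * volume Q =
      (∫⁻ ω, K ω {x | (ω, x) ∈ D ∧ g (ω, x) ∈ Q} ∂P) * volume Q := by
    rw [← lintegral_mul_const' _ _ hQ1, ← lintegral_mul_const' _ _ hQ1]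
    simp_rw [← key1, ← key2]
    rw [lintegral_lintegral_swap hF.aemeasurable, lintegral_lintegral_swap hF'.aemeasurable]
    simp_rw [hstep]
  exact (ENNReal.mul_left_inj hQ0 hQ1).1 hmain

/-! ### Anchors -/

/-- `y` is an anchor at scale `r` if it carries more than half of the mass that `H ω` puts on the
closed ball of radius `r` around `y`. Anchors at scale `r` are atoms of `H ω` at mutual distances
larger than `r`, and every atom is an anchor at all small scales. -/
def IsAnchor {d : ℕ} (H : Kernel Ω (Rd d)) (r : ℝ) (ω : Ω) (y : Rd d) : Prop :=
  H ω (Metric.closedBall y r) < 2 * H ω {y}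

lemma IsAnchor.pos {d : ℕ} {H : Kernel Ω (Rd d)} {r : ℝ} {ω : Ω} {y : Rd d}
    (h : IsAnchor H r ω y) : 0 < H ω {y} := by
  rw [pos_iff_ne_zero]
  intro h0
  simp [IsAnchor, h0] at h

lemma IsAnchor.eq_of_dist_le {d : ℕ} {H : Kernel Ω (Rd d)} {r : ℝ} {ω : Ω} {y z : Rd d}
    (hy : IsAnchor H r ω y) (hz : IsAnchor H r ω z) (h : dist y z ≤ r) : y = z := by
  by_contra hne
  have main : ∀ u v : Rd d, u ≠ v → dist u v ≤ r → IsAnchor H r ω u → H ω {v} < H ω {u} := by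
    intro u v huv hd hu
    have h1 : H ω {u} + H ω {v} ≤ H ω (Metric.closedBall u r) := by
      rw [← measure_union (by simpa using huv) (measurableSet_singleton v)]
      refine measure_mono ?_
      rintro w (rfl | rfl)
      · exact Metric.mem_closedBall_self (dist_nonneg.trans hd)
      · rwa [Metric.mem_closedBall, dist_comm]
    have h2 := h1.trans_lt hu
    rw [two_mul] at h2
    exact lt_of_add_lt_add_left h2
  exact lt_asymm (main y z hne h hy) (main z y (Ne.symm hne) (by rwa [dist_comm]) hz)

lemma isAnchor_shift {d : ℕ} {θ : Rd d → Ω → Ω} {H : Kernel Ω (Rd d)} (hH : IsPerfect θ H)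
    (r : ℝ) (ω : Ω) (x y : Rd d) : IsAnchor H r (θ x ω) (y - x) ↔ IsAnchor H r ω y := by
  unfold IsAnchor
  rw [hH.apply, hH.apply]
  have h1 : {z | z - x ∈ Metric.closedBall (y - x) r} = Metric.closedBall y r := by
    ext z; simp [Metric.mem_closedBall]
  have h2 : {z | z - x ∈ ({y - x} : Set (Rd d))} = {y} := by
    ext z; simp
  rw [h1, h2]

lemma measurableSet_isAnchor {d : ℕ} (H : Kernel Ω (Rd d)) [IsSFiniteKernel H] (r : ℝ) :
    MeasurableSet {p : Ω × Rd d | IsAnchor H r p.1 p.2} := by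
  refine measurableSet_lt ?_ (Measurable.const_mul ?_ 2)
  · refine measurable_kernel_section H (f := fun p : Ω × Rd d => p.1) measurable_fst
      (S := {q : (Ω × Rd d) × Rd d | dist q.2 q.1.2 ≤ r}) ?_
    exact measurableSet_le (by fun_prop) measurable_const
  · refine measurable_kernel_section H (f := fun p : Ω × Rd d => p.1) measurable_fst
      (S := {q : (Ω × Rd d) × Rd d | q.2 = q.1.2}) ?_
    exact measurableSet_eq_fun (by fun_prop) (by fun_prop)

lemma exists_isAnchor {d : ℕ} (H : Kernel Ω (Rd d)) {ω : Ω} [IsLocallyFiniteMeasure (H ω)]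
    {y : Rd d} (hy : H ω {y} ≠ 0) : ∃ k : ℕ, IsAnchor H (1 / ((k : ℝ) + 1)) ω y := by
  have hlim : Tendsto (fun k : ℕ => H ω (Metric.closedBall y (1 / ((k : ℝ) + 1)))) atTop
      (𝓝 (H ω {y})) := by
    have h := tendsto_measure_iInter_atTop (μ := H ω)
      (s := fun k : ℕ => Metric.closedBall y (1 / ((k : ℝ) + 1)))
      (fun k => Metric.isClosed_closedBall.measurableSet.nullMeasurableSet)
      (fun a b hab => Metric.closedBall_subset_closedBall (Nat.one_div_le_one_div hab))
      ⟨0, (isCompact_closedBall _ _).measure_lt_top.ne⟩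
    have he : ⋂ k : ℕ, Metric.closedBall y (1 / ((k : ℝ) + 1)) = {y} := by
      ext z
      simp only [mem_iInter, Metric.mem_closedBall, mem_singleton_iff]
      constructor
      · intro hz
        exact dist_le_zero.1 (ge_of_tendsto' tendsto_one_div_add_atTop_nhds_zero_nat hz)
      · rintro rfl k
        rw [dist_self]; positivity
    rwa [he] at h
  have hlt : H ω {y} < 2 * H ω {y} := by
    rw [two_mul]
    exact ENNReal.lt_add_right isCompact_singleton.measure_lt_top.ne hy
  exact (hlim.eventually (gt_mem_nhds hlt)).exists

/-- For a set `C` of diameter at most `r`, each point lies in `y + C` for at most one anchor `y` at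
scale `r`; that anchor is a measurable function of the point and of `ω`. -/
lemma exists_anchor_map {d : ℕ} (H : Kernel Ω (Rd d)) [IsSFiniteKernel H] (r : ℝ)
    {C : Set (Rd d)} (hC : MeasurableSet C) (hCr : ∀ u ∈ C, ∀ v ∈ C, dist u v ≤ r) :
    ∃ (V : Set (Ω × Rd d)) (p : Ω × Rd d → Rd d), MeasurableSet V ∧ Measurable p ∧
      (∀ ω x, (ω, x) ∈ V ↔ ∃ y, IsAnchor H r ω y ∧ x - y ∈ C) ∧
      ∀ ω x y, IsAnchor H r ω y → x - y ∈ C → p (ω, x) = y := by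
  classical
  have huniq : ∀ ω (x y z : Rd d), IsAnchor H r ω y → x - y ∈ C → IsAnchor H r ω z → x - z ∈ C →
      y = z := by
    intro ω x y z hy hxy hz hxz
    refine hy.eq_of_dist_le hz ?_
    have h := hCr _ hxy _ hxz
    rwa [dist_sub_left] at h
  have hmeas : ∀ B : Set (Rd d), MeasurableSet B →
      MeasurableSet {q : Ω × Rd d | ∃ y, y ∈ B ∧ IsAnchor H r q.1 y ∧ q.2 - y ∈ C} := by
    intro B hB
    have hT : MeasurableSet {t : (Ω × Rd d) × Rd d |
        t.2 ∈ B ∧ IsAnchor H r t.1.1 t.2 ∧ t.1.2 - t.2 ∈ C} := by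
      refine (measurable_snd hB).inter (MeasurableSet.inter ?_ ?_)
      · exact (by fun_prop : Measurable fun t : (Ω × Rd d) × Rd d => (t.1.1, t.2))
          (measurableSet_isAnchor H r)
      · exact (by fun_prop : Measurable fun t : (Ω × Rd d) × Rd d => t.1.2 - t.2) hC
    have hf := measurable_kernel_section H (f := fun q : Ω × Rd d => q.1) measurable_fst hT
    -- the set of anchors in question is non-empty iff it has positive mass, anchors being atoms
    convert (hf (measurableSet_singleton 0)).compl using 1
    ext q
    simp only [mem_ofPred_eq, mem_compl_iff, mem_preimage, mem_singleton_iff]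
    constructor
    · rintro ⟨y, hy⟩ h0
      have h1 : H q.1 {y} ≤ 0 := by
        rw [← h0]
        exact measure_mono (singleton_subset_iff.2 hy)
      exact hy.2.1.pos.not_ge h1
    · intro h0
      obtain ⟨y, hy⟩ := nonempty_of_measure_ne_zero h0
      exact ⟨y, hy⟩
  let V : Set (Ω × Rd d) := {q | ∃ y, IsAnchor H r q.1 y ∧ q.2 - y ∈ C}
  have hV : MeasurableSet V := by
    convert hmeas univ MeasurableSet.univ using 1
    ext q
    simp [V]
  let p : Ω × Rd d → Rd d := fun q => if h : q ∈ V then h.choose else 0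
  have hp : ∀ ω x y, IsAnchor H r ω y → x - y ∈ C → p (ω, x) = y := by
    intro ω x y hy hxy
    have hmem : (ω, x) ∈ V := ⟨y, hy, hxy⟩
    simp only [p, dif_pos hmem]
    exact huniq ω x _ _ hmem.choose_spec.1 hmem.choose_spec.2 hy hxy
  refine ⟨V, p, hV, ?_, fun ω x => Iff.rfl, hp⟩
  intro B hB
  have hset : p ⁻¹' B = {q : Ω × Rd d | ∃ y, y ∈ B ∧ IsAnchor H r q.1 y ∧ q.2 - y ∈ C} ∪
      (Vᶜ ∩ {_q | (0 : Rd d) ∈ B}) := by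
    ext ⟨ω, x⟩
    simp only [mem_preimage, mem_union, mem_ofPred_eq, mem_inter_iff, mem_compl_iff]
    by_cases hmem : (ω, x) ∈ V
    · obtain ⟨y, hy, hxy⟩ := hmem
      rw [hp ω x y hy hxy]
      constructor
      · exact fun hyB => Or.inl ⟨y, hyB, hy, hxy⟩
      · rintro (⟨z, hz, h1, h2⟩ | ⟨h, -⟩)
        · rwa [huniq ω x y z hy hxy h1 h2]
        · exact absurd ⟨y, hy, hxy⟩ h
    · simp only [p, dif_neg hmem, hmem, not_false_eq_true, true_and]
      constructor
      · exact fun h => Or.inr h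
      · rintro (⟨z, -, h1, h2⟩ | h)
        · exact absurd ⟨z, h1, h2⟩ hmem
        · exact h
  rw [hset]
  exact (hmeas B hB).union (hV.compl.inter (MeasurableSet.const _))

/-! ### One step of the greedy transport -/

/-- Around each anchor `y` at scale `r`, the diffuse kernel `K` on `y + C` is transported into the
kernel `L` on `y + C'` until one of the two is exhausted. -/
lemma exists_step_alloc {d : ℕ} {θ : Rd d → Ω → Ω} (hflow : IsMeasurableFlow θ)
    {H K L : Kernel Ω (Rd d)} (hH : IsPerfect θ H) (hK : IsPerfect θ K) (hL : IsPerfect θ L)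
    (hdiff : ∀ ω x, K ω {x} = 0) (r : ℝ) {C C' : Set (Rd d)} (hC : MeasurableSet C)
    (hC' : MeasurableSet C') (hCr : ∀ u ∈ C, ∀ v ∈ C, dist u v ≤ r)
    (hCr' : ∀ u ∈ C', ∀ v ∈ C', dist u v ≤ r)
    (hCb : Bornology.IsBounded C) (hCb' : Bornology.IsBounded C') :
    ∃ (D : Set (Ω × Rd d)) (g : Ω × Rd d → Rd d), IsPartialAlloc θ D g ∧
      (∀ ω B, MeasurableSet B → K ω {x | (ω, x) ∈ D ∧ g (ω, x) ∈ B} ≤ L ω B) ∧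
      ∀ ω y, IsAnchor H r ω y → K ω {x | (ω, x) ∉ D ∧ x - y ∈ C} = 0 ∨
        L ω {x | x - y ∈ C'} ≤ K ω {x | (ω, x) ∈ D ∧ g (ω, x) - y ∈ C'} := by
  have := hH.sfinite
  obtain ⟨V, p, hV, hp, hVmem, hpeq⟩ := exists_anchor_map H r hC hCr
  obtain ⟨D₀, g₀, hD₀, hg₀, hle₀, halt₀⟩ := exists_local_transport (K.restrict hC) (L.restrict hC')
    (fun ω => ⟨by
      have := hK.lf ω
      simpa [Kernel.restrict_apply] using hCb.measure_lt_top⟩)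
    (fun ω => ⟨by
      have := hL.lf ω
      simpa [Kernel.restrict_apply] using hCb'.measure_lt_top⟩)
    (fun ω x => by
      rw [Kernel.restrict_apply]
      exact Measure.restrict_le_self.absolutelyContinuous (hdiff ω x))
  simp only [Kernel.restrict_apply] at hle₀ halt₀
  have hθ : ∀ (a b : Rd d) ω, θ a (θ b ω) = θ (a + b) ω := fun a b ω =>
    congrFun (hflow.comp a b) ω
  -- the picture as seen from the anchor of a site
  let Φ : Ω × Rd d → Ω × Rd d := fun q => (θ (p q) q.1, q.2 - p q)
  have hΦ : Measurable Φ :=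
    (hflow.measurable.comp (hp.prodMk measurable_fst)).prodMk (measurable_snd.sub hp)
  have hVinv : ∀ ω x y, (θ y ω, x - y) ∈ V ↔ (ω, x) ∈ V := by
    intro ω x y
    rw [hVmem, hVmem]
    constructor
    · rintro ⟨z, hz, hxz⟩
      refine ⟨z + y, ?_, ?_⟩
      · rw [← isAnchor_shift hH r ω y]; simpa using hz
      · convert hxz using 1; abel
    · rintro ⟨z, hz, hxz⟩
      refine ⟨z - y, (isAnchor_shift hH r ω y z).2 hz, ?_⟩
      convert hxz using 1; abel
  have hpinv : ∀ ω x y, (ω, x) ∈ V → p (θ y ω, x - y) = p (ω, x) - y := by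
    intro ω x y h
    obtain ⟨z, hz, hxz⟩ := (hVmem ω x).1 h
    rw [hpeq ω x z hz hxz]
    refine hpeq _ _ _ ((isAnchor_shift hH r ω y z).2 hz) ?_
    convert hxz using 1; abel
  have hΦinv : ∀ ω x y, (ω, x) ∈ V → Φ (θ y ω, x - y) = Φ (ω, x) := by
    intro ω x y h
    simp only [Φ, hpinv ω x y h, hθ]
    congr 1
    · congr 1; abel
    · abel
  let D : Set (Ω × Rd d) := {q | q ∈ V ∧ Φ q ∈ D₀}
  let g : Ω × Rd d → Rd d := fun q => g₀ (Φ q) + p q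
  have halloc : IsPartialAlloc θ D g := by
    refine ⟨hV.inter (hΦ hD₀), (hg₀.comp hΦ).add hp, ?_, ?_⟩
    · intro ω x y
      simp only [D, mem_ofPred_eq, hVinv]
      constructor
      · rintro ⟨h1, h2⟩; exact ⟨h1, by rwa [hΦinv _ _ _ h1] at h2⟩
      · rintro ⟨h1, h2⟩; exact ⟨h1, by rwa [hΦinv _ _ _ h1]⟩
    · rintro ω x y ⟨h1, -⟩
      simp only [g, hΦinv _ _ _ h1, hpinv _ _ _ h1]
      abel
  have hΦa : ∀ ω y z, IsAnchor H r ω y → z ∈ C → Φ (ω, z + y) = (θ y ω, z) := by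
    intro ω y z hy hz
    have : p (ω, z + y) = y := hpeq _ _ _ hy (by simpa using hz)
    simp [Φ, this]
  have hpa : ∀ ω y z, IsAnchor H r ω y → z ∈ C → p (ω, z + y) = y := fun ω y z hy hz =>
    hpeq _ _ _ hy (by simpa using hz)
  -- around an anchor the transport is the local one
  have hloc : ∀ ω y (B : Set (Rd d)), IsAnchor H r ω y →
      K ω {x | x - y ∈ C ∧ (ω, x) ∈ D ∧ g (ω, x) ∈ B} =
        (K (θ y ω)).restrict C {z | (θ y ω, z) ∈ D₀ ∧ g₀ (θ y ω, z) ∈ {w | w + y ∈ B}} := by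
    intro ω y B hy
    rw [hK.apply_add y, Measure.restrict_apply' hC]
    congr 1
    ext z
    simp only [mem_ofPred_eq, add_sub_cancel_right, mem_inter_iff, D, g]
    constructor
    · rintro ⟨h1, ⟨h2, h3⟩, h4⟩
      rw [hΦa ω y z hy h1] at h3 h4
      rw [hpa ω y z hy h1] at h4
      exact ⟨⟨h3, h4⟩, h1⟩
    · rintro ⟨⟨h3, h4⟩, h1⟩
      rw [hΦa ω y z hy h1, hpa ω y z hy h1]
      exact ⟨h1, ⟨(hVmem _ _).2 ⟨y, hy, by simpa using h1⟩, h3⟩, h4⟩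
  have hlocL : ∀ ω (y : Rd d) B, MeasurableSet B →
      (L (θ y ω)).restrict C' {w | w + y ∈ B} = L ω (B ∩ {x | x - y ∈ C'}) := by
    intro ω y B hB
    rw [hL.apply_add y ω, Measure.restrict_apply' hC']
    congr 1
    ext z
    simp
  have hmeasB : ∀ (y : Rd d) B, MeasurableSet B → MeasurableSet {w : Rd d | w + y ∈ B} :=
    fun y B hB => (by fun_prop : Measurable fun w : Rd d => w + y) hB
  have hmeasC' : ∀ y : Rd d, MeasurableSet {x : Rd d | x - y ∈ C'} :=
    fun y => (by fun_prop : Measurable fun w : Rd d => w - y) hC'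
  refine ⟨D, g, halloc, ?_, ?_⟩
  · intro ω B hB
    have hcount : {y | IsAnchor H r ω y}.Countable := by
      have := hH.sigmaFinite ω
      exact (countable_atoms (H ω)).mono fun y hy => hy.pos
    have hsub : {x | (ω, x) ∈ D ∧ g (ω, x) ∈ B} ⊆
        ⋃ y ∈ {y | IsAnchor H r ω y}, {x | x - y ∈ C ∧ (ω, x) ∈ D ∧ g (ω, x) ∈ B} := by
      rintro x ⟨h1, h2⟩
      obtain ⟨y, hy, hxy⟩ := (hVmem _ _).1 h1.1
      exact mem_biUnion hy ⟨hxy, h1, h2⟩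
    calc K ω {x | (ω, x) ∈ D ∧ g (ω, x) ∈ B}
        ≤ ∑' y : {y | IsAnchor H r ω y}, K ω {x | x - y ∈ C ∧ (ω, x) ∈ D ∧ g (ω, x) ∈ B} :=
          (measure_mono hsub).trans (measure_biUnion_le _ hcount _)
      _ ≤ ∑' y : {y | IsAnchor H r ω y}, L ω (B ∩ {x | x - y ∈ C'}) := by
          refine ENNReal.tsum_le_tsum fun y => ?_
          rw [hloc ω y B y.2, ← hlocL ω y B hB]
          exact hle₀ _ _ (hmeasB _ _ hB)
      _ = L ω (⋃ y ∈ {y | IsAnchor H r ω y}, B ∩ {x | x - y ∈ C'}) := by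
          rw [measure_biUnion hcount]
          · intro y hy z hz hyz
            refine Set.disjoint_left.2 ?_
            rintro x ⟨-, hx⟩ ⟨-, hx'⟩
            refine hyz (hy.eq_of_dist_le hz ?_)
            have h := hCr' _ hx _ hx'
            rwa [dist_sub_left] at h
          · exact fun y _ => hB.inter (hmeasC' y)
      _ ≤ L ω B := measure_mono (iUnion₂_subset fun y _ => inter_subset_left)
  · intro ω y hy
    rcases halt₀ (θ y ω) with h | h
    · left
      rw [Measure.restrict_apply' hC] at h
      rw [hK.apply_add y]
      refine measure_mono_null ?_ h
      rintro z ⟨h1, h2⟩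
      have hz : z ∈ C := by simpa using h2
      refine ⟨fun h3 => h1 ⟨(hVmem _ _).2 ⟨y, hy, h2⟩, ?_⟩, hz⟩
      rw [hΦa ω y z hy hz]
      exact h3
    · right
      have h1 := h _ (hmeasB y _ (hmeasC' y))
      rw [hlocL ω y _ (hmeasC' y), inter_self, ← hloc ω y _ hy] at h1
      exact h1.trans (measure_mono fun x hx => hx.2)

/-- One greedy step, together with the remaining source and destination. -/
lemma exists_step {d : ℕ} {θ : Rd d → Ω → Ω} (hflow : IsMeasurableFlow θ)
    {H K L : Kernel Ω (Rd d)} (hH : IsPerfect θ H) (hK : IsPerfect θ K) (hL : IsPerfect θ L)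
    (hdiff : ∀ ω x, K ω {x} = 0) (r : ℝ) {C C' : Set (Rd d)} (hC : MeasurableSet C)
    (hC' : MeasurableSet C') (hCr : ∀ u ∈ C, ∀ v ∈ C, dist u v ≤ r)
    (hCr' : ∀ u ∈ C', ∀ v ∈ C', dist u v ≤ r)
    (hCb : Bornology.IsBounded C) (hCb' : Bornology.IsBounded C') :
    ∃ (D : Set (Ω × Rd d)) (g : Ω × Rd d → Rd d) (K' L' : Kernel Ω (Rd d)),
      IsPartialAlloc θ D g ∧ IsPerfect θ K' ∧ IsPerfect θ L' ∧
      (∀ ω, K' ω = (K ω).restrict {x | (ω, x) ∉ D}) ∧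
      (∀ ω B, MeasurableSet B → L ω B = L' ω B + K ω {x | (ω, x) ∈ D ∧ g (ω, x) ∈ B}) ∧
      ∀ ω y, IsAnchor H r ω y → K' ω {x | x - y ∈ C} = 0 ∨ L' ω {x | x - y ∈ C'} = 0 := by
  obtain ⟨D, g, halloc, hle, halt⟩ :=
    exists_step_alloc hflow hH hK hL hdiff r hC hC' hCr hCr' hCb hCb'
  obtain ⟨K', hK', hK'eq⟩ := hK.exists_restrict halloc.measD.compl
    (fun ω x y => not_congr (halloc.dom ω x y))
  obtain ⟨L', hL', hL'eq⟩ := exists_remainder hK hL halloc hle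
  refine ⟨D, g, K', L', halloc, hK', hL', hK'eq, hL'eq, fun ω y hy => ?_⟩
  have hmC : MeasurableSet {x : Rd d | x - y ∈ C} :=
    (by fun_prop : Measurable fun w : Rd d => w - y) hC
  have hmC' : MeasurableSet {x : Rd d | x - y ∈ C'} :=
    (by fun_prop : Measurable fun w : Rd d => w - y) hC'
  rcases halt ω y hy with h | h
  · left
    rw [hK'eq, Measure.restrict_apply hmC]
    refine measure_mono_null ?_ h
    exact fun x hx => ⟨hx.2, hx.1⟩
  · right
    have hfin : L ω {x | x - y ∈ C'} ≠ ∞ := by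
      have := hL.lf (θ y ω)
      rw [← hL.apply]
      exact hCb'.measure_lt_top.ne
    have h1 := hL'eq ω _ hmC'
    have h2 : L' ω {x | x - y ∈ C'} + L ω {x | x - y ∈ C'} ≤ 0 + L ω {x | x - y ∈ C'} := by
      rw [zero_add]
      conv_rhs => rw [h1]
      exact add_le_add le_rfl h
    exact le_zero_iff.1 ((ENNReal.add_le_add_iff_right hfin).1 h2)

/-! ### Perfect versions of flow-invariant random measures -/

lemma isLocallyFiniteMeasure_of_closedBall {d : ℕ} {μ : Measure (Rd d)}
    (h : ∀ n : ℕ, μ (Metric.closedBall 0 n) < ∞) : IsLocallyFiniteMeasure μ := by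
  refine ⟨fun x => ?_⟩
  obtain ⟨n, hn⟩ := exists_nat_gt (dist x 0)
  exact ⟨Metric.closedBall 0 n, mem_of_superset (Metric.isOpen_ball.mem_nhds hn)
    Metric.ball_subset_closedBall, h n⟩

/-- Equality of two measurable families of measures is a measurable event, since it can be tested
on a countable `π`-system and the closed balls around the origin. -/
lemma measurableSet_measure_eq {α : Type*} [MeasurableSpace α] {d : ℕ}
    {f g : α → Measure (Rd d)} (hf : Measurable f) (hg : Measurable g)
    (hlf : ∀ a, IsLocallyFiniteMeasure (f a)) : MeasurableSet {a | f a = g a} := by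
  let b : ℕ → Set (Rd d) := MeasurableSpace.natGeneratingSequence (Rd d)
  have hb : ∀ n, MeasurableSet (b n) := MeasurableSpace.measurableSet_natGeneratingSequence
  let c : Finset ℕ → Set (Rd d) := fun t => ⋂ i ∈ t, b i
  have hc : ∀ t, MeasurableSet (c t) := fun t => Finset.measurableSet_biInter t fun i _ => hb i
  have hgen : (inferInstance : MeasurableSpace (Rd d)) =
      MeasurableSpace.generateFrom (range c) := by
    refine le_antisymm ?_ (MeasurableSpace.generateFrom_le ?_)
    · conv_lhs => rw [← MeasurableSpace.generateFrom_natGeneratingSequence (Rd d)]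
      refine MeasurableSpace.generateFrom_mono ?_
      rintro _ ⟨n, rfl⟩
      exact ⟨{n}, by simp [c, b]⟩
    · rintro _ ⟨t, rfl⟩
      exact hc t
  have hpi : IsPiSystem (range c) := by
    rintro _ ⟨s, rfl⟩ _ ⟨t, rfl⟩ -
    exact ⟨s ∪ t, by simp only [c, Finset.mem_union, iInter_or, iInter_inter_distrib]⟩
  have hset : {a | f a = g a} = ⋂ (t : Finset ℕ) (n : ℕ),
      {a | f a (c t ∩ Metric.closedBall 0 n) = g a (c t ∩ Metric.closedBall 0 n)} := by
    ext a
    simp only [mem_ofPred_eq, mem_iInter]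
    refine ⟨fun h t n => by rw [h], fun h => ?_⟩
    have := hlf a
    refine Measure.ext_of_generateFrom_of_cover (T := range fun n : ℕ => Metric.closedBall 0 (n : ℝ))
      hgen (countable_range _) hpi ?_ ?_ ?_ ?_
    · rw [sUnion_range, iUnion_closedBall_nat_eq]
    · rintro _ ⟨n, rfl⟩
      exact (isCompact_closedBall _ _).measure_lt_top.ne
    · rintro _ ⟨n, rfl⟩ _ ⟨t, rfl⟩
      exact h t n
    · rintro _ ⟨n, rfl⟩
      simpa [c] using h ∅ n
  rw [hset]
  refine MeasurableSet.iInter fun t => MeasurableSet.iInter fun n => ?_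
  have hm : MeasurableSet (c t ∩ Metric.closedBall (0 : Rd d) n) :=
    (hc t).inter Metric.isClosed_closedBall.measurableSet
  exact measurableSet_eq_fun ((Measure.measurable_coe hm).comp hf)
    ((Measure.measurable_coe hm).comp hg)

/-- A flow-invariant random measure has a perfect version. Its value at `ω` is the almost everywhere
constant value (if there is one) of `x ↦ (K (θ x ω)).map (· + x)`, which makes it equivariant for
every `ω`. The last claim allows almost sure properties of `K` to be passed on to every `ω`. -/
lemma exists_perfect_version {d : ℕ} {P : Measure Ω} [IsProbabilityMeasure P]
    {θ : Rd d → Ω → Ω} (hflow : IsMeasurableFlow θ) (hstat : IsStationary P θ)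
    (K : Kernel Ω (Rd d)) (hlf : ∀ ω, IsLocallyFiniteMeasure (K ω))
    (hinv : ∀ x, ∀ᵐ ω ∂P, K (θ x ω) = (K ω).map (fun y => y - x))
    {A₀ : Set Ω} (hA₀ : MeasurableSet A₀) (hA₀P : ∀ᵐ ω ∂P, ω ∈ A₀) :
    ∃ K' : Kernel Ω (Rd d), IsPerfect θ K' ∧ (∀ᵐ ω ∂P, K' ω = K ω) ∧
      ∀ ω, K' ω = 0 ∨ ∃ ω' ∈ A₀, ∃ x, K' ω = (K ω').map (fun y => y + x) := by
  classical
  have := isSFiniteKernel_of_locallyFinite hlf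
  have hθ : ∀ x y ω, θ x (θ y ω) = θ (x + y) ω := fun x y ω => congrFun (hflow.comp x y) ω
  have hθx : ∀ x, Measurable (θ x) := fun x => hflow.measurable.comp (measurable_prodMk_left)
  have hθ' : Measurable fun q : Ω × Rd d => θ q.2 q.1 := hflow.measurable.comp measurable_swap
  have hmadd : ∀ x : Rd d, Measurable fun y : Rd d => y + x := fun x => by fun_prop
  have hmsub : ∀ x : Rd d, Measurable fun y : Rd d => y - x := fun x => by fun_prop
  -- the configuration seen from `x`, moved back to its place
  let F : Ω × Rd d → Measure (Rd d) := fun q => (K (θ q.2 q.1)).map (fun y => y + q.2)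
  have hFapply : ∀ q B, MeasurableSet B → F q B = K (θ q.2 q.1) {y | y + q.2 ∈ B} :=
    fun q B hB => Measure.map_apply (hmadd _) hB
  have hF : Measurable F := by
    refine Measure.measurable_of_measurable_coe _ fun B hB => ?_
    simp_rw [fun q => hFapply q B hB]
    exact measurable_kernel_section K hθ' (S := {t : (Ω × Rd d) × Rd d | t.2 + t.1.2 ∈ B})
      ((by fun_prop : Measurable fun t : (Ω × Rd d) × Rd d => t.2 + t.1.2) hB)
  have hFlf : ∀ q, IsLocallyFiniteMeasure (F q) := by
    intro q
    refine isLocallyFiniteMeasure_of_closedBall fun n => ?_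
    have := hlf (θ q.2 q.1)
    rw [hFapply _ _ Metric.isClosed_closedBall.measurableSet]
    have hsub : {y | y + q.2 ∈ Metric.closedBall (0 : Rd d) n} ⊆
        Metric.closedBall (-q.2) n := by
      intro y hy
      simpa [dist_eq_norm] using hy
    exact (measure_mono hsub).trans_lt (isCompact_closedBall _ _).measure_lt_top
  have hFshift : ∀ ω x y, F (θ y ω, x) = (F (ω, x + y)).map (fun z => z - y) := by
    intro ω x y
    simp only [F, hθ]
    rw [Measure.map_map (hmsub _) (hmadd _)]
    congr 1
    ext1 z
    simp only [Function.comp]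
    abel
  let ν : Measure (Rd d) := ProbabilityTheory.cond volume (Metric.closedBall 0 1)
  have hνprob : IsProbabilityMeasure ν :=
    ProbabilityTheory.cond_isProbabilityMeasure_of_finite
      (Metric.measure_closedBall_pos _ _ one_pos).ne' (isCompact_closedBall _ _).measure_lt_top.ne
  have hνac : ν ≪ volume := ProbabilityTheory.cond_absolutelyContinuous
  let M : Ω → Measure (Rd d) := fun ω => Measure.bind ν (fun x => F (ω, x))
  have hFω : ∀ ω, Measurable fun x => F (ω, x) := fun ω => hF.comp measurable_prodMk_left
  have hMapply : ∀ ω B, MeasurableSet B → M ω B = ∫⁻ x, F (ω, x) B ∂ν := fun ω B hB =>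
    Measure.bind_apply hB (hFω ω).aemeasurable
  have hM : Measurable M := by
    refine Measure.measurable_of_measurable_coe _ fun B hB => ?_
    simp_rw [fun ω => hMapply ω B hB]
    exact ((Measure.measurable_coe hB).comp hF).lintegral_prod_right'
  have hMconst : ∀ ω c, (∀ᵐ x, F (ω, x) = c) → M ω = c := by
    intro ω c h
    ext B hB
    rw [hMapply ω B hB, lintegral_congr_ae (g := fun _ => c B)]
    · simp
    · filter_upwards [hνac h] with x hx
      rw [hx]
  let T : Set (Ω × Rd d) := {q | F q = M q.1} ∩ {q | θ q.2 q.1 ∈ A₀}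
  have hT : MeasurableSet T :=
    (measurableSet_measure_eq hF (hM.comp measurable_fst) hFlf).inter (hθ' hA₀)
  let A : Set Ω := {ω | volume {x | (ω, x) ∈ Tᶜ} = 0}
  have hA : MeasurableSet A :=
    (measurable_measure_prodMk_left hT.compl) (measurableSet_singleton 0)
  have hAmem : ∀ ω, ω ∈ A ↔ ∀ᵐ x, F (ω, x) = M ω ∧ θ x ω ∈ A₀ := fun ω => Iff.rfl
  have hAof : ∀ ω c, (∀ᵐ x, F (ω, x) = c ∧ θ x ω ∈ A₀) → ω ∈ A ∧ M ω = c := by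
    intro ω c h
    have hc := hMconst ω c (h.mono fun x hx => hx.1)
    exact ⟨(hAmem ω).2 (by rw [hc]; exact h), hc⟩
  have hAshift : ∀ ω y, ω ∈ A → θ y ω ∈ A ∧ M (θ y ω) = (M ω).map (fun z => z - y) := by
    intro ω y h
    refine hAof _ _ ?_
    have h1 : ∀ᵐ x, F (ω, x + y) = M ω ∧ θ (x + y) ω ∈ A₀ :=
      (measurePreserving_add_right volume y).quasiMeasurePreserving.ae ((hAmem ω).1 h)
    filter_upwards [h1] with x hx
    rw [hFshift, hx.1, hθ]
    exact ⟨rfl, hx.2⟩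
  have hAshift' : ∀ ω y, θ y ω ∈ A → ω ∈ A := by
    intro ω y h
    have h1 := (hAshift _ (-y) h).1
    rwa [hθ, neg_add_cancel, hflow.id_eq] at h1
  have hae : ∀ᵐ ω ∂P, ω ∈ A ∧ M ω = K ω := by
    have h1 : ∀ᵐ ω ∂P, ∀ᵐ x, F (ω, x) = K ω ∧ θ x ω ∈ A₀ := by
      rw [Measure.ae_ae_comm]
      · refine Eventually.of_forall fun x => ?_
        have h2 : ∀ᵐ ω ∂P, θ x ω ∈ A₀ := by
          have h3 : ∀ᵐ ω ∂(P.map (θ x)), ω ∈ A₀ := by rw [hstat x]; exact hA₀P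
          exact ae_of_ae_map (hθx x).aemeasurable h3
        filter_upwards [h2, hinv x] with ω h2 h3
        refine ⟨?_, h2⟩
        simp only [F, h3]
        rw [Measure.map_map (hmadd _) (hmsub _)]
        simp [Function.comp_def]
      · exact (measurableSet_measure_eq hF (K.measurable.comp measurable_fst) hFlf).inter (hθ' hA₀)
    filter_upwards [h1] with ω h
    exact hAof _ _ h
  let K' : Kernel Ω (Rd d) := ⟨fun ω => if ω ∈ A then M ω else 0, Measurable.ite hA hM measurable_const⟩
  have hKone : ∀ ω, ω ∈ A → K' ω = M ω := fun ω h => if_pos h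
  have hKzero : ∀ ω, ω ∉ A → K' ω = 0 := fun ω h => if_neg h
  refine ⟨K', ⟨fun ω => ?_, fun x ω => ?_⟩, ?_, fun ω => ?_⟩
  · by_cases h : ω ∈ A
    · obtain ⟨x, hx⟩ := ((hAmem ω).1 h).exists
      rw [hKone ω h, ← hx.1]
      exact hFlf _
    · rw [hKzero ω h]
      infer_instance
  · by_cases h : ω ∈ A
    · rw [hKone ω h, hKone _ (hAshift ω x h).1, (hAshift ω x h).2]
    · rw [hKzero ω h, hKzero _ (fun h' => h (hAshift' ω x h')), Measure.map_zero]
  · filter_upwards [hae] with ω h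
    rw [hKone ω h.1, h.2]
  · by_cases h : ω ∈ A
    · right
      obtain ⟨x, hx⟩ := ((hAmem ω).1 h).exists
      exact ⟨θ x ω, hx.2, x, by rw [hKone ω h, ← hx.1]⟩
    · exact Or.inl (hKzero ω h)

/-- The perfect version of a flow-invariant random measure; it is diffuse for every `ω` if the
random measure is diffuse. -/
lemma exists_perfect_of_randomMeasure {d : ℕ} {P : Measure Ω} [IsProbabilityMeasure P]
    {θ : Rd d → Ω → Ω} (hflow : IsMeasurableFlow θ) (hstat : IsStationary P θ)
    {ξ : Ω → Measure (Rd d)} (hξ : IsRandomMeasure P ξ) (hinv : IsFlowInvariant P θ ξ) :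
    ∃ K : Kernel Ω (Rd d), IsPerfect θ K ∧ (∀ᵐ ω ∂P, K ω = ξ ω) ∧
      (IsDiffuseRM P ξ → ∀ ω x, K ω {x} = 0) := by
  classical
  have hξm : Measurable ξ := Measure.measurable_of_measurable_coe _ hξ.1
  have hθx : ∀ x, Measurable (θ x) := fun x => hflow.measurable.comp (measurable_prodMk_left)
  let A : Set Ω := ⋂ n : ℕ, {ω | ξ ω (Metric.closedBall 0 n) < ∞}
  have hA : MeasurableSet A := MeasurableSet.iInter fun n =>
    measurableSet_lt (hξ.1 _ Metric.isClosed_closedBall.measurableSet) measurable_const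
  have hAP : ∀ᵐ ω ∂P, ω ∈ A := by
    filter_upwards [hξ.2] with ω h
    exact mem_iInter.2 fun n => h _ (isCompact_closedBall _ _)
  let K₀ : Kernel Ω (Rd d) := ⟨fun ω => if ω ∈ A then ξ ω else 0, Measurable.ite hA hξm measurable_const⟩
  have hK₀1 : ∀ ω, ω ∈ A → K₀ ω = ξ ω := fun ω h => if_pos h
  have hK₀0 : ∀ ω, ω ∉ A → K₀ ω = 0 := fun ω h => if_neg h
  have hK₀ae : ∀ᵐ ω ∂P, K₀ ω = ξ ω := hAP.mono hK₀1
  have hlf : ∀ ω, IsLocallyFiniteMeasure (K₀ ω) := by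
    intro ω
    by_cases h : ω ∈ A
    · rw [hK₀1 ω h]
      exact isLocallyFiniteMeasure_of_closedBall fun n => mem_iInter.1 h n
    · rw [hK₀0 ω h]
      infer_instance
  have hinv₀ : ∀ x, ∀ᵐ ω ∂P, K₀ (θ x ω) = (K₀ ω).map (fun y => y - x) := by
    intro x
    have h1 : ∀ᵐ ω ∂P, K₀ (θ x ω) = ξ (θ x ω) := by
      have h3 : ∀ᵐ ω ∂(P.map (θ x)), K₀ ω = ξ ω := by rw [hstat x]; exact hK₀ae
      exact ae_of_ae_map (hθx x).aemeasurable h3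
    filter_upwards [h1, hK₀ae, hinv x] with ω h1 h2 h3
    rw [h1, h2, h3]
  -- a measurable set of full measure on which the diffuseness of `K₀`, if any, can be used
  obtain ⟨A₀, hA₀sub, hA₀m, hA₀P⟩ : ∃ A₀ : Set Ω,
      (IsDiffuseRM P ξ → ∀ ω ∈ A₀, ∀ x, K₀ ω {x} = 0) ∧ MeasurableSet A₀ ∧ ∀ᵐ ω ∂P, ω ∈ A₀ := by
    by_cases hd : IsDiffuseRM P ξ
    · have h1 : ∀ᵐ ω ∂P, ∀ x, K₀ ω {x} = 0 := by
        filter_upwards [hd, hK₀ae] with ω h1 h2 x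
        rw [h2, h1 x]
      obtain ⟨A₀, h2, h3, h4⟩ := h1.exists_measurable_mem
      exact ⟨A₀, fun _ => h4, h3, h2⟩
    · exact ⟨univ, fun h => absurd h hd, MeasurableSet.univ, by simp⟩
  obtain ⟨K, hK, hKae, hKval⟩ := exists_perfect_version hflow hstat K₀ hlf hinv₀ hA₀m hA₀P
  refine ⟨K, hK, ?_, fun hd ω x => ?_⟩
  · filter_upwards [hKae, hK₀ae] with ω h1 h2
    rw [h1, h2]
  · rcases hKval ω with h | ⟨ω₁, hω₁, y, h⟩
    · simp [h]
    · rw [h, Measure.map_apply (by fun_prop) (measurableSet_singleton x)]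
      have : (fun z => z + y) ⁻¹' {x} = {x - y} := by
        ext z
        simp only [mem_preimage, mem_singleton_iff, eq_sub_iff_add_eq]
      rw [this]
      exact hA₀sub hd ω₁ hω₁ _

/-! ### Iterating the greedy steps -/

/-- The small ball number `i` at scale `1 / (k + 1)`. Two of its points are at most `1 / (k + 1)`
apart, and for fixed `k` these balls cover the space. -/
def smallBall (d k i : ℕ) : Set (Rd d) :=
  Metric.ball (TopologicalSpace.denseSeq (Rd d) i) (1 / ((k : ℝ) + 1) / 2)

lemma dist_le_of_mem_smallBall {d k i : ℕ} {u v : Rd d} (hu : u ∈ smallBall d k i)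
    (hv : v ∈ smallBall d k i) : dist u v ≤ 1 / ((k : ℝ) + 1) := by
  have h1 := Metric.mem_ball.1 hu
  have h2 := Metric.mem_ball'.1 hv
  have h3 := dist_triangle u (TopologicalSpace.denseSeq (Rd d) i) v
  linarith

lemma exists_mem_smallBall (d k : ℕ) (x : Rd d) : ∃ i, x ∈ smallBall d k i := by
  have hpos : (0 : ℝ) < 1 / ((k : ℝ) + 1) / 2 := by positivity
  obtain ⟨i, hi⟩ := (TopologicalSpace.denseRange_denseSeq (Rd d)).exists_dist_lt x hpos
  exact ⟨i, hi⟩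

/-- A greedy step for each triple `(k, i, j)`, performed one after the other, each one on what the
earlier ones have left over of `X` and `H`. -/
lemma exists_iterate {d : ℕ} {θ : Rd d → Ω → Ω} (hflow : IsMeasurableFlow θ)
    {H X : Kernel Ω (Rd d)} (hH : IsPerfect θ H) (hX : IsPerfect θ X)
    (hdiff : ∀ ω x, X ω {x} = 0) :
    ∃ (D : ℕ → Set (Ω × Rd d)) (g : ℕ → Ω × Rd d → Rd d) (K L : ℕ → Kernel Ω (Rd d)),
      K 0 = X ∧ L 0 = H ∧ (∀ n, IsPartialAlloc θ (D n) (g n)) ∧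
      (∀ n, IsPerfect θ (K n)) ∧ (∀ n, IsPerfect θ (L n)) ∧
      (∀ n ω, K (n + 1) ω = (K n ω).restrict {x | (ω, x) ∉ D n}) ∧
      (∀ n ω B, MeasurableSet B →
        L n ω B = L (n + 1) ω B + K n ω {x | (ω, x) ∈ D n ∧ g n (ω, x) ∈ B}) ∧
      ∀ k i j : ℕ, ∃ n, ∀ ω y, IsAnchor H (1 / ((k : ℝ) + 1)) ω y →
        K n ω {x | x - y ∈ smallBall d k i} = 0 ∨ L n ω {x | x - y ∈ smallBall d k j} = 0 := by
  let State := {p : Kernel Ω (Rd d) × Kernel Ω (Rd d) //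
    IsPerfect θ p.1 ∧ IsPerfect θ p.2 ∧ ∀ ω x, p.1 ω {x} = 0}
  have hstep : ∀ (t : ℕ × ℕ × ℕ) (s : State),
      ∃ (D : Set (Ω × Rd d)) (g : Ω × Rd d → Rd d) (s' : State), IsPartialAlloc θ D g ∧
        (∀ ω, s'.1.1 ω = (s.1.1 ω).restrict {x | (ω, x) ∉ D}) ∧
        (∀ ω B, MeasurableSet B →
          s.1.2 ω B = s'.1.2 ω B + s.1.1 ω {x | (ω, x) ∈ D ∧ g (ω, x) ∈ B}) ∧
        ∀ ω y, IsAnchor H (1 / ((t.1 : ℝ) + 1)) ω y →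
          s'.1.1 ω {x | x - y ∈ smallBall d t.1 t.2.1} = 0 ∨
            s'.1.2 ω {x | x - y ∈ smallBall d t.1 t.2.2} = 0 := by
    rintro ⟨k, i, j⟩ ⟨⟨K, L⟩, hK, hL, hd⟩
    obtain ⟨D, g, K', L', h1, h2, h3, h4, h5, h6⟩ :=
      exists_step hflow hH hK hL hd (1 / ((k : ℝ) + 1))
        (C := smallBall d k i) (C' := smallBall d k j)
        Metric.isOpen_ball.measurableSet Metric.isOpen_ball.measurableSet
        (fun u hu v hv => dist_le_of_mem_smallBall hu hv)
        (fun u hu v hv => dist_le_of_mem_smallBall hu hv)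
        Metric.isBounded_ball Metric.isBounded_ball
    refine ⟨D, g, ⟨⟨K', L'⟩, h2, h3, fun ω x => ?_⟩, h1, h4, h5, h6⟩
    have : K' ω {x} ≤ K ω {x} := by
      rw [h4]
      exact Measure.restrict_apply_le _ _
    exact le_zero_iff.1 (this.trans (hd ω x).le)
  choose D g next h1 h2 h3 h4 using hstep
  obtain ⟨e, he⟩ := exists_surjective_nat (ℕ × ℕ × ℕ)
  let s : ℕ → State := fun n =>
    Nat.rec ⟨⟨X, H⟩, hX, hH, hdiff⟩ (fun n s => next (e n) s) n
  refine ⟨fun n => D (e n) (s n), fun n => g (e n) (s n), fun n => (s n).1.1, fun n => (s n).1.2,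
    rfl, rfl, fun n => h1 _ _, fun n => (s n).2.1, fun n => (s n).2.2.1, fun n => h2 _ _,
    fun n => h3 _ _, fun k i j => ?_⟩
  obtain ⟨n, hn⟩ := he (k, i, j)
  refine ⟨n + 1, fun ω y hy => ?_⟩
  have h := h4 (e n) (s n) ω y
  rw [hn] at h
  have hres := h hy
  change (next (e n) (s n)).1.1 ω _ = 0 ∨ (next (e n) (s n)).1.2 ω _ = 0
  rw [hn]
  exact hres

/-- The union of all greedy steps: as long as the destination has an atom, either the source or
the destination is used up. -/
lemma exists_greedy {d : ℕ} {θ : Rd d → Ω → Ω} (hflow : IsMeasurableFlow θ)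
    {H X : Kernel Ω (Rd d)} (hH : IsPerfect θ H) (hX : IsPerfect θ X)
    (hdiff : ∀ ω x, X ω {x} = 0) :
    ∃ (D : Set (Ω × Rd d)) (g : Ω × Rd d → Rd d) (X' H' : Kernel Ω (Rd d)),
      IsPartialAlloc θ D g ∧ IsPerfect θ X' ∧ IsPerfect θ H' ∧
      (∀ ω, X' ω = (X ω).restrict {x | (ω, x) ∉ D}) ∧
      (∀ ω B, MeasurableSet B → H ω B = H' ω B + X ω {x | (ω, x) ∈ D ∧ g (ω, x) ∈ B}) ∧
      ∀ ω y, H ω {y} ≠ 0 → X' ω = 0 ∨ H' ω = 0 := by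
  classical
  obtain ⟨D, g, K, L, hK0, hL0, hg, hK, hL, hKs, hLs, hend⟩ := exists_iterate hflow hH hX hdiff
  have hDω : ∀ n ω, MeasurableSet {x | (ω, x) ∈ D n} := fun n ω =>
    measurable_prodMk_left (hg n).measD
  have hDω' : ∀ n ω, MeasurableSet {x | ∀ k < n, (ω, x) ∉ D k} := by
    intro n ω
    have : {x | ∀ k < n, (ω, x) ∉ D k} = ⋂ k, ⋂ (_ : k < n), {x | (ω, x) ∈ D k}ᶜ := by
      ext x; simp
    rw [this]
    exact MeasurableSet.iInter fun k => MeasurableSet.iInter fun _ => (hDω k ω).compl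
  have hKn : ∀ n ω, K n ω = (X ω).restrict {x | ∀ k < n, (ω, x) ∉ D k} := by
    intro n ω
    induction n with
    | zero => simp [hK0]
    | succ n ih =>
      have hm : MeasurableSet {x | (ω, x) ∉ D n} := (hDω n ω).compl
      rw [hKs, ih, Measure.restrict_restrict hm]
      congr 1
      ext x
      simp only [mem_inter_iff, mem_ofPred_eq, Nat.lt_succ_iff_lt_or_eq]
      constructor
      · rintro ⟨h1, h2⟩ k (hk | rfl)
        exacts [h2 k hk, h1]
      · exact fun h => ⟨h n (Or.inr rfl), fun k hk => h k (Or.inl hk)⟩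
  have hLn : ∀ n ω B, MeasurableSet B → H ω B = L n ω B +
      ∑ k ∈ Finset.range n, K k ω {x | (ω, x) ∈ D k ∧ g k (ω, x) ∈ B} := by
    intro n ω B hB
    induction n with
    | zero => simp [hL0]
    | succ n ih =>
      rw [ih, hLs n ω B hB, Finset.sum_range_succ]
      ring
  -- a site is allocated by the first step that allocates it
  let E : Set (Ω × Rd d) := ⋃ n, D n
  have hE : MeasurableSet E := MeasurableSet.iUnion fun n => (hg n).measD
  have hex : ∀ q : Ω × Rd d, ∃ n, q ∈ D n ∨ q ∉ E := by
    intro q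
    by_cases h : q ∈ E
    · obtain ⟨n, hn⟩ := mem_iUnion.1 h
      exact ⟨n, Or.inl hn⟩
    · exact ⟨0, Or.inr h⟩
  let G : Ω × Rd d → Rd d := fun q => g (Nat.find (hex q)) q
  have hGeq : ∀ n q, q ∈ D n → (∀ k < n, q ∉ D k) → G q = g n q := by
    intro n q h1 h2
    have hqE : q ∈ E := mem_iUnion.2 ⟨n, h1⟩
    have : Nat.find (hex q) = n := by
      rw [Nat.find_eq_iff]
      refine ⟨Or.inl h1, fun k hk h => ?_⟩
      rcases h with h | h
      exacts [h2 k hk h, h hqE]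
    simp only [G, this]
  have hfirst : ∀ q ∈ E, ∃ n, q ∈ D n ∧ ∀ k < n, q ∉ D k := by
    intro q hq
    have h := mem_iUnion.1 hq
    exact ⟨Nat.find h, Nat.find_spec h, fun k hk => Nat.find_min h hk⟩
  have hG : IsPartialAlloc θ E G := by
    have hdomE : ∀ ω x y, (θ y ω, x - y) ∈ E ↔ (ω, x) ∈ E := by
      intro ω x y
      simp only [E, mem_iUnion, (hg _).dom]
    refine ⟨hE, ?_, hdomE, ?_⟩
    · exact Measurable.find (p := fun n q => q ∈ D n ∨ q ∉ E) (fun n => (hg n).measg)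
        (fun n => (hg n).measD.union hE.compl) hex
    · intro ω x y h
      obtain ⟨n, h1, h2⟩ := hfirst _ h
      rw [hGeq n _ h1 h2, hGeq n _ (((hg n).dom ω x y).2 h1)
        (fun k hk h' => h2 k hk (((hg k).dom ω x y).1 h')), (hg n).equiv ω x y h1]
  have himage : ∀ ω B, MeasurableSet B → X ω {x | (ω, x) ∈ E ∧ G (ω, x) ∈ B} =
      ∑' n, K n ω {x | (ω, x) ∈ D n ∧ g n (ω, x) ∈ B} := by
    intro ω B hB
    have hset : {x | (ω, x) ∈ E ∧ G (ω, x) ∈ B} =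
        ⋃ n, {x | (ω, x) ∈ D n ∧ g n (ω, x) ∈ B} ∩ {x | ∀ k < n, (ω, x) ∉ D k} := by
      ext x
      simp only [mem_ofPred_eq, mem_iUnion, mem_inter_iff]
      constructor
      · rintro ⟨h1, h2⟩
        obtain ⟨n, h3, h4⟩ := hfirst _ h1
        rw [hGeq n _ h3 h4] at h2
        exact ⟨n, ⟨h3, h2⟩, h4⟩
      · rintro ⟨n, ⟨h3, h2⟩, h4⟩
        rw [hGeq n _ h3 h4]
        exact ⟨mem_iUnion.2 ⟨n, h3⟩, h2⟩
    rw [hset, measure_iUnion]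
    · congr 1
      ext n
      rw [hKn, Measure.restrict_apply' (hDω' n ω)]
    · intro m n hmn
      refine Set.disjoint_left.2 ?_
      rintro x ⟨⟨h1, -⟩, h2⟩ ⟨⟨h3, -⟩, h4⟩
      rcases lt_or_gt_of_ne hmn with h | h
      exacts [h4 m h h1, h2 n h h3]
    · intro n
      refine MeasurableSet.inter ((hDω n ω).inter ?_) (hDω' n ω)
      exact ((hg n).measg.comp measurable_prodMk_left) hB
  have hle : ∀ ω B, MeasurableSet B → X ω {x | (ω, x) ∈ E ∧ G (ω, x) ∈ B} ≤ H ω B := by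
    intro ω B hB
    rw [himage ω B hB]
    refine ENNReal.tsum_le_of_sum_range_le fun n => ?_
    rw [hLn n ω B hB]
    exact le_add_self
  obtain ⟨X', hX', hX'eq⟩ := hX.exists_restrict hG.measD.compl
    (fun ω x y => not_congr (hG.dom ω x y))
  obtain ⟨H', hH', hH'eq⟩ := exists_remainder hX hH hG hle
  refine ⟨E, G, X', H', hG, hX', hH', hX'eq, hH'eq, fun ω y hy => ?_⟩
  have hX'le : ∀ n B, X' ω B ≤ K n ω B := by
    intro n B
    rw [hX'eq, hKn]
    have hsub : {x | (ω, x) ∉ E} ⊆ {x | ∀ k < n, (ω, x) ∉ D k} :=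
      fun x hx k _ h => hx (mem_iUnion.2 ⟨k, h⟩)
    exact Measure.restrict_mono hsub le_rfl B
  have hH'le : ∀ n B, MeasurableSet B → H ω B < ∞ → H' ω B ≤ L n ω B := by
    intro n B hB hfin
    have h1 : ∑ k ∈ Finset.range n, K k ω {x | (ω, x) ∈ D k ∧ g k (ω, x) ∈ B} ≤
        X ω {x | (ω, x) ∈ E ∧ G (ω, x) ∈ B} := by
      rw [himage ω B hB]
      exact ENNReal.sum_le_tsum _
    have h2 := (h1.trans (hle ω B hB)).trans_lt hfin
    rw [← ENNReal.add_le_add_iff_right h2.ne, ← hLn n ω B hB, hH'eq ω B hB]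
    exact add_le_add le_rfl h1
  by_contra hcon
  push Not at hcon
  have := hH.lf ω
  obtain ⟨k, hk⟩ := exists_isAnchor H hy
  -- some small ball around the anchor contains remaining mass
  have hball : ∀ μ : Measure (Rd d), μ ≠ 0 → ∃ i, μ {x | x - y ∈ smallBall d k i} ≠ 0 := by
    intro μ hμ
    by_contra h
    push Not at h
    refine hμ (Measure.measure_univ_eq_zero.1 (measure_mono_null ?_ (measure_iUnion_null h)))
    intro x _
    exact mem_iUnion.2 (exists_mem_smallBall d k (x - y))
  obtain ⟨i, hi⟩ := hball _ hcon.1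
  obtain ⟨j, hj⟩ := hball _ hcon.2
  obtain ⟨n, hn⟩ := hend k i j
  rcases hn ω y hk with h | h
  · exact hi (le_zero_iff.1 ((hX'le n _).trans h.le))
  · refine hj (le_zero_iff.1 ((hH'le n _ ?_ ?_).trans h.le))
    · exact (by fun_prop : Measurable fun w : Rd d => w - y) Metric.isOpen_ball.measurableSet
    · have := hH.lf (θ y ω)
      rw [← hH.apply]
      exact Metric.isBounded_ball.measure_lt_top

/-! ### Ergodic conclusion -/

lemma isCompact_unitCube (d : ℕ) : IsCompact (unitCube d) := by
  have h := (EuclideanSpace.equiv (Fin d) ℝ).toHomeomorph.isCompact_preimage.2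
    (isCompact_univ_pi fun _ : Fin d => isCompact_Icc (a := (0 : ℝ)) (b := 1))
  convert h using 1
  ext x
  simp only [mem_preimage, mem_univ_pi]
  rfl

/-- The open unit cube around `z - 1/2`, i.e. the set of `x` for which `z` lies in the interior of
the unit cube translated by `x`. -/
lemma isOpen_cube_around {d : ℕ} (z : Rd d) :
    IsOpen {x : Rd d | ∀ i, z i - x i ∈ Ioo (0 : ℝ) 1} := by
  rw [ofPred_forall]
  refine isOpen_iInter_of_finite fun i => ?_
  exact isOpen_Ioo.preimage (by fun_prop : Continuous fun x : Rd d => z i - x i)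

lemma volume_unitCube_ne_zero (d : ℕ) : volume (unitCube d) ≠ 0 := by
  have hne : {x : Rd d | ∀ i, (WithLp.toLp 2 (fun _ => 1) : Rd d) i - x i ∈
      Ioo (0 : ℝ) 1}.Nonempty :=
    ⟨WithLp.toLp 2 (fun _ => 1 / 2), fun i => by norm_num⟩
  have hpos := (isOpen_cube_around (WithLp.toLp 2 (fun _ => 1) : Rd d)).measure_pos volume hne
  refine (hpos.trans_le (measure_mono ?_)).ne'
  intro x hx i
  have h := hx i
  simp only [mem_Ioo] at h
  constructor <;> linarith [h.1, h.2]

/-- A perfect random measure of intensity zero vanishes almost surely, since countably many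
translates of the unit cube cover the space. -/
lemma IsPerfect.ae_eq_zero {d : ℕ} {P : Measure Ω} {θ : Rd d → Ω → Ω}
    (hflow : IsMeasurableFlow θ) (hstat : IsStationary P θ) {K : Kernel Ω (Rd d)}
    (hK : IsPerfect θ K) (h0 : ∫⁻ ω, K ω (unitCube d) ∂P = 0) : ∀ᵐ ω ∂P, K ω = 0 := by
  have hQ : MeasurableSet (unitCube d) := (isCompact_unitCube d).measurableSet
  have hae : ∀ᵐ ω ∂P, K ω (unitCube d) = 0 :=
    (lintegral_eq_zero_iff (K.measurable_coe hQ)).1 h0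
  have hx : ∀ x, ∀ᵐ ω ∂P, K ω {y | y - x ∈ unitCube d} = 0 := by
    intro x
    have h3 : ∀ᵐ ω ∂(P.map (θ x)), K ω (unitCube d) = 0 := by rw [hstat x]; exact hae
    have hθx : Measurable (θ x) := hflow.measurable.comp measurable_prodMk_left
    filter_upwards [ae_of_ae_map hθx.aemeasurable h3] with ω hω
    rwa [hK.apply] at hω
  have hall := ae_all_iff.2 fun n : ℕ => hx (TopologicalSpace.denseSeq (Rd d) n)
  filter_upwards [hall] with ω hω
  refine Measure.measure_univ_eq_zero.1 (measure_mono_null ?_ (measure_iUnion_null hω))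
  intro z _
  obtain ⟨n, hn⟩ := (TopologicalSpace.denseRange_denseSeq (Rd d)).exists_mem_open
    (isOpen_cube_around z) ⟨z - WithLp.toLp 2 (fun _ => 1 / 2), fun i => by norm_num⟩
  exact mem_iUnion.2 ⟨n, fun i => Ioo_subset_Icc_self (hn i)⟩

/-- A non-zero measure carried by a countable set has an atom. -/
lemma exists_atom_of_countable {d : ℕ} {μ : Measure (Rd d)} (hμ : μ ≠ 0) {s : Set (Rd d)}
    (hs : s.Countable) (hsc : μ sᶜ = 0) : ∃ y, μ {y} ≠ 0 := by
  by_contra h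
  push Not at h
  refine hμ (Measure.measure_univ_eq_zero.1 ?_)
  rw [← union_compl_self s]
  refine measure_union_null ?_ hsc
  rw [← biUnion_of_singleton s]
  exact (measure_biUnion_null_iff hs).2 fun y _ => h y

/-- **Proposition (mixed destination).** Let `ξ` and `η` be jointly stationary
and ergodic random measures on `ℝ^d` with `λ_ξ = λ_η < ∞`, `ξ` diffuse and
`η = η^disc + η^diff` mixed, with `η^disc` a non-zero discrete random measure
and `η^diff` a non-zero diffuse random measure. Then there exists an allocation
balancing `ξ` and `η`. -/
theorem exists_balancing_allocation_of_mixed_destination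
    {d : ℕ} {Ω : Type*} [MeasurableSpace Ω] (P : Measure Ω) [IsProbabilityMeasure P]
    (θ : Rd d → Ω → Ω) (ξ η ηdisc ηdiff : Ω → Measure (Rd d))
    (hflow : IsMeasurableFlow θ) (hstat : IsStationary P θ) (herg : IsErgodicFlow P θ)
    (hξ : IsRandomMeasure P ξ) (hη : IsRandomMeasure P η)
    (hηd : IsRandomMeasure P ηdisc) (hηf : IsRandomMeasure P ηdiff)
    (hξinv : IsFlowInvariant P θ ξ) (hηinv : IsFlowInvariant P θ η)
    (hηdinv : IsFlowInvariant P θ ηdisc) (hηfinv : IsFlowInvariant P θ ηdiff)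
    (hξdiff : IsDiffuseRM P ξ)
    (hsum : ∀ᵐ ω ∂P, η ω = ηdisc ω + ηdiff ω)
    (hdisc : IsDiscreteRM P ηdisc) (hdiff : IsDiffuseRM P ηdiff)
    (hdne : ∀ᵐ ω ∂P, ηdisc ω ≠ 0) (hfne : ∀ᵐ ω ∂P, ηdiff ω ≠ 0)
    (heq : intensity P ξ = intensity P η) (hfin : intensity P η < ∞) :
    ∃ τ : Ω → Rd d → Option (Rd d), IsAllocation P θ τ ∧ Balances P ξ η τ := by
  classical
  obtain ⟨X, hX, hXae, hXdiff⟩ := exists_perfect_of_randomMeasure hflow hstat hξ hξinv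
  obtain ⟨H, hH, hHae, -⟩ := exists_perfect_of_randomMeasure hflow hstat hη hηinv
  obtain ⟨D, g, X', H', hg, hX', hH', hX'eq, hH'eq, halt⟩ :=
    exists_greedy hflow hH hX (hXdiff hξdiff)
  have hQ : MeasurableSet (unitCube d) := (isCompact_unitCube d).measurableSet
  have hDω : ∀ ω, MeasurableSet {x | (ω, x) ∈ D} := fun ω => measurable_prodMk_left hg.measD
  -- both remainders have the same intensity
  have hintens : ∫⁻ ω, X' ω (unitCube d) ∂P = ∫⁻ ω, H' ω (unitCube d) ∂P := by
    have hXint : ∫⁻ ω, X ω (unitCube d) ∂P = intensity P ξ :=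
      lintegral_congr_ae (hXae.mono fun ω h => by simp only [h])
    have hHint : ∫⁻ ω, H ω (unitCube d) ∂P = intensity P η :=
      lintegral_congr_ae (hHae.mono fun ω h => by simp only [h])
    have hXsplit : ∀ ω, X ω (unitCube d) =
        X' ω (unitCube d) + X ω {x | (ω, x) ∈ D ∧ x ∈ unitCube d} := by
      intro ω
      rw [hX'eq, Measure.restrict_apply hQ, ← measure_sdiff_add_inter (unitCube d) (hDω ω)]
      congr 2
      ext x
      exact and_comm
    have h1 : ∫⁻ ω, X ω (unitCube d) ∂P = ∫⁻ ω, X' ω (unitCube d) ∂P +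
        ∫⁻ ω, X ω {x | (ω, x) ∈ D ∧ x ∈ unitCube d} ∂P := by
      rw [← lintegral_add_left (X'.measurable_coe hQ)]
      exact lintegral_congr hXsplit
    have h2 : ∫⁻ ω, H ω (unitCube d) ∂P = ∫⁻ ω, H' ω (unitCube d) ∂P +
        ∫⁻ ω, X ω {x | (ω, x) ∈ D ∧ g (ω, x) ∈ unitCube d} ∂P := by
      rw [← lintegral_add_left (H'.measurable_coe hQ)]
      exact lintegral_congr fun ω => hH'eq ω _ hQ
    have h3 : ∫⁻ ω, X ω {x | (ω, x) ∈ D ∧ g (ω, x) ∈ unitCube d} ∂P ≠ ∞ := by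
      refine (lt_of_le_of_lt ?_ hfin).ne
      rw [← hHint, h2]
      exact le_add_self
    rw [mass_transport P hflow hstat hX hg hQ (volume_unitCube_ne_zero d)
      (isCompact_unitCube d).measure_lt_top.ne, hXint, heq, ← hHint, h2] at h1
    exact ((ENNReal.add_left_inj h3).1 h1).symm
  have hatom : ∀ᵐ ω ∂P, X' ω = 0 ∨ H' ω = 0 := by
    filter_upwards [hsum, hdisc, hdne, hHae] with ω h1 ⟨s, hs, hsc⟩ h3 h4
    obtain ⟨y, hy⟩ := exists_atom_of_countable h3 hs hsc
    refine halt ω y ?_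
    rw [h4, h1, Measure.add_apply]
    exact fun h => hy (add_eq_zero.1 h).1
  have hboth : (∀ᵐ ω ∂P, X' ω = 0) ∧ ∀ᵐ ω ∂P, H' ω = 0 := by
    have hzero : ∀ K : Kernel Ω (Rd d), (∀ᵐ ω ∂P, K ω = 0) → ∫⁻ ω, K ω (unitCube d) ∂P = 0 := by
      intro K hK
      rw [lintegral_eq_zero_iff (K.measurable_coe hQ)]
      filter_upwards [hK] with ω h
      simp [h]
    have hor : (∀ᵐ ω ∂P, X' ω = 0) ∨ ∀ᵐ ω ∂P, H' ω = 0 := by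
      have hA : MeasurableSet {ω | X' ω univ = 0} :=
        (X'.measurable_coe MeasurableSet.univ) (measurableSet_singleton 0)
      rcases herg _ hA (fun x => by
          ext ω
          change X' (θ x ω) univ = 0 ↔ X' ω univ = 0
          rw [hX'.apply]
          rfl) with h | h
      · right
        have h' : ∀ᵐ ω ∂P, ¬ X' ω univ = 0 := by
          rw [ae_iff]
          simpa using h
        filter_upwards [h', hatom] with ω h1 h2
        exact h2.resolve_left fun h3 => h1 (by simp [h3])
      · left
        have h' := (mem_ae_iff_prob_eq_one hA).2 h
        filter_upwards [h'] with ω h1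
        exact Measure.measure_univ_eq_zero.1 h1
    rcases hor with h | h
    · exact ⟨h, hH'.ae_eq_zero hflow hstat (hintens ▸ hzero X' h)⟩
    · exact ⟨hX'.ae_eq_zero hflow hstat (hintens.trans (hzero H' h)), h⟩
  let τ : Ω → Rd d → Option (Rd d) := fun ω x => if (ω, x) ∈ D then some (g (ω, x)) else none
  have hτ1 : ∀ ω x, (ω, x) ∈ D → τ ω x = some (g (ω, x)) := fun ω x h => if_pos h
  have hτ0 : ∀ ω x, (ω, x) ∉ D → τ ω x = none := fun ω x h => if_neg h
  have hsome : Measurable (some : Rd d → Option (Rd d)) := fun s hs => hs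
  refine ⟨τ, ⟨Measurable.ite hg.measD (hsome.comp hg.measg) measurable_const,
    Eventually.of_forall fun ω x y => ?_⟩, ?_⟩
  · by_cases h : (ω, x) ∈ D
    · rw [hτ1 _ _ h, hτ1 _ _ ((hg.dom ω x y).2 h), hg.equiv ω x y h]
      rfl
    · rw [hτ0 _ _ h, hτ0 _ _ (fun h' => h ((hg.dom ω x y).1 h'))]
      rfl
  · filter_upwards [hXae, hHae, hboth.1, hboth.2] with ω h1 h2 h3 h4
    rw [← h1, ← h2]
    constructor
    · have hset : {z | τ ω z = none} = {x | (ω, x) ∉ D} := by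
        ext z
        by_cases h : (ω, z) ∈ D
        · simp [hτ1 _ _ h, h]
        · simp [hτ0 _ _ h, h]
      have h5 : X' ω univ = 0 := by simp [h3]
      rwa [hX'eq, Measure.restrict_apply_univ, ← hset] at h5
    · intro C hC
      have hset : {z | ∃ y ∈ C, τ ω z = some y} = {x | (ω, x) ∈ D ∧ g (ω, x) ∈ C} := by
        ext z
        by_cases h : (ω, z) ∈ D
        · simp [hτ1 _ _ h, h]
        · simp [hτ0 _ _ h, h]
      rw [hset, hH'eq ω C hC, h4]
      simp

end Paper
end
end

section
/- Let ξ and η be jointly stationary random measures on ℝ^d with finite intensities. If some allocation τ balances ξ and η, then λ_ξ = λ_η. -/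
/-!
The proof is a discrete mass transport argument. Split `ℝ^d` into the half-open lattice cubes
`C_k = k + [0,1)^d`, `k ∈ ℤ^d` (the fibres of the coordinatewise floor), and let
`m(k,l) = E ξ(C_k ∩ τ⁻¹ C_l)` be the expected mass which `τ` transports from `C_k` to `C_l`.
Stationarity and equivariance give `m(k + x, l + x) = m(k, l)` for `x ∈ ℤ^d` (`transport_shift`), so
`E ξ(C_0) = ∑_l m(0,l) = ∑_l m(-l,0) = E η(C_0)` (`transport_out`, `transport_in`).

To pass from `C_0` to the closed cube in the definition of the intensity, note that the intensity
measure `C ↦ E ξ(C)` is translation invariant and, the intensity being finite, finite on compact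
sets. Both intensity measures are therefore multiples of Lebesgue measure, and they agree on `C_0`,
which has Lebesgue measure `1`; hence they coincide.

The kernel `ξ` is locally finite only almost surely, so the mass transported between two cubes
is only almost everywhere measurable in `ω` (`aemeasurable_section`).
-/


open MeasureTheory ENNReal

noncomputable section

namespace Paper

variable {Ω : Type*} [MeasurableSpace Ω]
variable {G : Type*} [MeasurableSpace G] [TopologicalSpace G] [AddCommGroup G]

/-! ### Lattice cubes -/

/-- The coordinatewise floor; its fibres are the half-open lattice cubes `k + [0,1)^d`. -/
def fl {d : ℕ} (x : Rd d) : Fin d → ℤ := fun i => ⌊x i⌋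

/-- An integer vector as a point of `ℝ^d`. -/
def vec {d : ℕ} (k : Fin d → ℤ) : Rd d := WithLp.toLp 2 fun i => (k i : ℝ)

/-- The half-open lattice cube `k + [0,1)^d`. -/
def cube {d : ℕ} (k : Fin d → ℤ) : Set (Rd d) := fl ⁻¹' {k}

lemma measurable_fl {d : ℕ} : Measurable (fl : Rd d → _) := by
  refine measurable_pi_lambda _ fun i => ?_
  exact Int.measurable_floor.comp (by fun_prop)

lemma measurableSet_cube {d : ℕ} (k : Fin d → ℤ) : MeasurableSet (cube k) :=
  measurable_fl (measurableSet_singleton k)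

lemma fl_sub_vec {d : ℕ} (z : Rd d) (x : Fin d → ℤ) : fl (z - vec x) = fl z - x := by
  funext i
  simp [fl, vec]

lemma cube_zero_subset {d : ℕ} : cube (0 : Fin d → ℤ) ⊆ unitCube d := by
  intro z hz i
  have h : ⌊z i⌋ = 0 := congrFun hz i
  rw [Int.floor_eq_zero_iff] at h
  exact ⟨h.1, h.2.le⟩

lemma volume_cube_zero {d : ℕ} : volume (cube (0 : Fin d → ℤ)) = 1 := by
  have h : cube (0 : Fin d → ℤ) =
      (@WithLp.ofLp 2 (Fin d → ℝ)) ⁻¹' (Set.pi Set.univ fun _ => Set.Ico (0 : ℝ) 1) := by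
    ext z
    simp only [cube, fl, Set.mem_preimage, Set.mem_singleton_iff, funext_iff, Pi.zero_apply,
      Int.floor_eq_zero_iff, Set.mem_pi, Set.mem_univ, true_imp_iff]
  rw [h, (PiLp.volume_preserving_ofLp (Fin d)).measure_preimage
    (MeasurableSet.univ_pi fun _ => measurableSet_Ico).nullMeasurableSet, Real.volume_pi_Ico]
  simp

lemma measurableSet_unitCube {d : ℕ} : MeasurableSet (unitCube d) := by
  have : unitCube d = ⋂ i, (fun x : Rd d => x i) ⁻¹' Set.Icc (0 : ℝ) 1 := by
    ext; simp [unitCube]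
  rw [this]
  exact MeasurableSet.iInter fun i => measurableSet_Icc.preimage (by fun_prop)

lemma interior_unitCube_nonempty {d : ℕ} : (interior (unitCube d)).Nonempty := by
  have ho : IsOpen (⋂ i, (fun x : Rd d => x i) ⁻¹' Set.Ioo (0 : ℝ) 1) :=
    isOpen_iInter_of_finite fun i => isOpen_Ioo.preimage (by fun_prop)
  refine ⟨WithLp.toLp 2 fun _ => 1 / 2, interior_maximal ?_ ho ?_⟩
  · intro x hx i
    exact Set.Ioo_subset_Icc_self (Set.mem_iInter.1 hx i)
  · simp only [Set.mem_iInter, Set.mem_preimage, Set.mem_Ioo]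
    intro i
    norm_num

lemma tsum_measure_inter_fiber {α ι : Type*} [MeasurableSpace α] [Countable ι] (μ : Measure α)
    {f : α → ι} (hf : ∀ k, MeasurableSet (f ⁻¹' {k})) {A : Set α} (hA : MeasurableSet A) :
    ∑' k, μ (A ∩ f ⁻¹' {k}) = μ A := by
  rw [← measure_iUnion]
  · congr 1
    ext z
    simp
  · intro k l hkl
    refine Set.disjoint_left.2 fun z hz hz' => hkl ?_
    exact hz.2.symm.trans hz'.2
  · exact fun k => hA.inter (hf k)

/-! ### Intensity measures -/

lemma measurable_of_isRandomMeasure {d : ℕ} {P : Measure Ω} {ξ : Ω → Measure (Rd d)}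
    (hξ : IsRandomMeasure P ξ) : Measurable ξ :=
  Measure.measurable_of_measurable_coe _ hξ.1

lemma bind_apply_of_isRandomMeasure {d : ℕ} {P : Measure Ω} {ξ : Ω → Measure (Rd d)}
    (hξ : IsRandomMeasure P ξ) {s : Set (Rd d)} (hs : MeasurableSet s) :
    P.bind ξ s = ∫⁻ ω, ξ ω s ∂P :=
  Measure.bind_apply hs (measurable_of_isRandomMeasure hξ).aemeasurable

lemma measurable_flow {d : ℕ} {θ : Rd d → Ω → Ω} (hflow : IsMeasurableFlow θ) (x : Rd d) :
    Measurable (θ x) :=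
  hflow.measurable.comp measurable_prodMk_left

lemma lintegral_comp_flow {d : ℕ} {P : Measure Ω} {θ : Rd d → Ω → Ω}
    (hflow : IsMeasurableFlow θ) (hstat : IsStationary P θ) {F : Ω → ℝ≥0∞}
    (hF : AEMeasurable F P) (x : Rd d) : ∫⁻ ω, F (θ x ω) ∂P = ∫⁻ ω, F ω ∂P := by
  rw [← lintegral_map' (by rwa [hstat x]) (measurable_flow hflow x).aemeasurable, hstat x]

lemma bind_isAddLeftInvariant {d : ℕ} {P : Measure Ω} {θ : Rd d → Ω → Ω}
    {ξ : Ω → Measure (Rd d)} (hflow : IsMeasurableFlow θ) (hstat : IsStationary P θ)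
    (hξ : IsRandomMeasure P ξ) (hinv : IsFlowInvariant P θ ξ) :
    (P.bind ξ).IsAddLeftInvariant := by
  rw [← forall_measure_preimage_add_iff]
  intro g A hA
  have hm : Measurable fun h : Rd d => g + h := measurable_const_add g
  rw [bind_apply_of_isRandomMeasure hξ (hm hA), bind_apply_of_isRandomMeasure hξ hA,
    ← lintegral_comp_flow hflow hstat (hξ.1 A hA).aemeasurable (-g)]
  refine lintegral_congr_ae ?_
  filter_upwards [hinv (-g)] with ω hω
  rw [hω, Measure.map_apply (measurable_sub_const _) hA]
  congr 1
  ext z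
  simp [add_comm]

lemma bind_isFiniteMeasureOnCompacts {d : ℕ} {P : Measure Ω} {ξ : Ω → Measure (Rd d)}
    (hξ : IsRandomMeasure P ξ) (hfin : intensity P ξ < ∞) [(P.bind ξ).IsAddLeftInvariant] :
    IsFiniteMeasureOnCompacts (P.bind ξ) := by
  refine ⟨fun K hK => measure_lt_top_of_isCompact_of_isAddLeftInvariant'
    interior_unitCube_nonempty ?_ hK⟩
  rw [bind_apply_of_isRandomMeasure hξ measurableSet_unitCube]
  exact hfin.ne

lemma ae_cube_lt_top {d : ℕ} {P : Measure Ω} {θ : Rd d → Ω → Ω}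
    {ξ : Ω → Measure (Rd d)} (hflow : IsMeasurableFlow θ) (hstat : IsStationary P θ)
    (hξ : IsRandomMeasure P ξ) (hinv : IsFlowInvariant P θ ξ) (hfin : intensity P ξ < ∞)
    (k : Fin d → ℤ) : ∀ᵐ ω ∂P, ξ ω (cube k) < ∞ := by
  have := bind_isAddLeftInvariant hflow hstat hξ hinv
  refine ae_lt_top (hξ.1 _ (measurableSet_cube k)) (ne_of_lt ?_)
  rw [← bind_apply_of_isRandomMeasure hξ (measurableSet_cube k),
    ← measure_preimage_add (P.bind ξ) (vec k)]
  have hsub : (fun h => vec k + h) ⁻¹' cube k ⊆ unitCube d := by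
    intro z hz
    apply cube_zero_subset
    have h1 : fl (vec k + z) = k := hz
    have h2 := fl_sub_vec (vec k + z) k
    rw [h1, sub_self, add_sub_cancel_left] at h2
    exact h2
  refine (measure_mono hsub).trans_lt ?_
  rw [bind_apply_of_isRandomMeasure hξ measurableSet_unitCube]
  exact hfin

/-! ### Mass transport between cubes -/

/-- The `ξ`-mass of a bounded random section is a.e. measurable: on the full event where
`ξ ω C < ∞` it agrees with the section mass of a kernel of finite measures. -/
lemma aemeasurable_section {d : ℕ} {P : Measure Ω} {ξ : Ω → Measure (Rd d)}
    (hξ : IsRandomMeasure P ξ) {C : Set (Rd d)} (hC : MeasurableSet C)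
    (hfin : ∀ᵐ ω ∂P, ξ ω C < ∞) {T : Set (Ω × Rd d)} (hT : MeasurableSet T) :
    AEMeasurable (fun ω => ξ ω (C ∩ Prod.mk ω ⁻¹' T)) P := by
  classical
  have hE : MeasurableSet {ω | ξ ω C < ∞} := measurableSet_lt (hξ.1 C hC) measurable_const
  let κ : ProbabilityTheory.Kernel Ω (Rd d) :=
    ⟨fun ω => if ω ∈ {ω | ξ ω C < ∞} then (ξ ω).restrict C else 0,
      Measurable.ite hE (Measure.measurable_of_measurable_coe _ fun s hs => by
        simpa only [Measure.restrict_apply hs] using hξ.1 _ (hs.inter hC)) measurable_const⟩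
  have hκ : ∀ ω, κ ω = if ω ∈ {ω | ξ ω C < ∞} then (ξ ω).restrict C else 0 := fun _ => rfl
  have hκfin : ∀ ω, IsFiniteMeasure (κ ω) := by
    intro ω
    rw [hκ]
    split_ifs with h
    · exact ⟨by simpa using h⟩
    · infer_instance
  refine ⟨_, ProbabilityTheory.Kernel.measurable_kernel_prodMk_left_of_finite hT hκfin, ?_⟩
  filter_upwards [hfin] with ω hω
  rw [hκ, if_pos (show ω ∈ {ω | ξ ω C < ∞} from hω), Measure.restrict_apply (measurable_prodMk_left hT), Set.inter_comm]

/-- The pairs `(ω, z)` for which `τ ω z` is a point of the cube `l`. -/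
def target {d : ℕ} (τ : Ω → Rd d → Option (Rd d)) (l : Fin d → ℤ) : Set (Ω × Rd d) :=
  {p | ∃ y ∈ cube l, τ p.1 p.2 = some y}

/-- The expected `ξ`-mass transported by `τ` from the cube `k` to the cube `l`. -/
def transport {d : ℕ} (P : Measure Ω) (ξ : Ω → Measure (Rd d)) (τ : Ω → Rd d → Option (Rd d))
    (k l : Fin d → ℤ) : ℝ≥0∞ :=
  ∫⁻ ω, ξ ω (cube k ∩ Prod.mk ω ⁻¹' target τ l) ∂P

lemma measurableSet_target {d : ℕ} {τ : Ω → Rd d → Option (Rd d)}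
    (hτ : Measurable fun p : Ω × Rd d => τ p.1 p.2) (l : Fin d → ℤ) :
    MeasurableSet (target τ l) := by
  have h : MeasurableSet (some '' cube l : Set (Option (Rd d))) := by
    change MeasurableSet (some ⁻¹' (some '' cube l))
    rw [Set.preimage_image_eq _ (Option.some_injective _)]
    exact measurableSet_cube l
  convert hτ h using 1
  ext p
  simp [target, eq_comm]

lemma transport_shift {d : ℕ} {P : Measure Ω} {θ : Rd d → Ω → Ω} {ξ : Ω → Measure (Rd d)}
    {τ : Ω → Rd d → Option (Rd d)} (hflow : IsMeasurableFlow θ) (hstat : IsStationary P θ)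
    (hξ : IsRandomMeasure P ξ) (hinv : IsFlowInvariant P θ ξ) (hfin : intensity P ξ < ∞)
    (hτ : IsAllocation P θ τ) (k l x : Fin d → ℤ) :
    transport P ξ τ (k + x) (l + x) = transport P ξ τ k l := by
  have hT := measurableSet_target hτ.1 l
  unfold transport
  rw [← lintegral_comp_flow hflow hstat (aemeasurable_section hξ (measurableSet_cube k)
    (ae_cube_lt_top hflow hstat hξ hinv hfin k) hT) (vec x)]
  refine lintegral_congr_ae ?_
  filter_upwards [hinv (vec x), hτ.2] with ω hω hωτ
  rw [hω, Measure.map_apply (measurable_sub_const _)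
    ((measurableSet_cube k).inter (measurable_prodMk_left hT))]
  congr 1
  ext z
  have hc : ∀ (j : Fin d → ℤ) (u : Rd d), u - vec x ∈ cube j ↔ u ∈ cube (j + x) := by
    intro j u
    simp only [cube, Set.mem_preimage, Set.mem_singleton_iff, fl_sub_vec, sub_eq_iff_eq_add]
  simp only [Set.mem_inter_iff, Set.mem_preimage, target, Set.mem_ofPred_eq, hωτ z (vec x), hc,
    Option.map_eq_some_iff]
  refine and_congr_right fun _ => ⟨?_, ?_⟩
  · rintro ⟨y, hy, hz⟩
    exact ⟨y - vec x, (hc l y).2 hy, y, hz, rfl⟩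
  · rintro ⟨_, hy, y, hz, rfl⟩
    exact ⟨y, (hc l y).1 hy, hz⟩

/-- Summing over the target cubes: `ξ`-almost no mass is sent to `∞`. -/
lemma transport_out {d : ℕ} {P : Measure Ω} {θ : Rd d → Ω → Ω} {ξ η : Ω → Measure (Rd d)}
    {τ : Ω → Rd d → Option (Rd d)} (hflow : IsMeasurableFlow θ) (hstat : IsStationary P θ)
    (hξ : IsRandomMeasure P ξ) (hinv : IsFlowInvariant P θ ξ) (hfin : intensity P ξ < ∞)
    (hτ : IsAllocation P θ τ) (hbal : Balances P ξ η τ) (k : Fin d → ℤ) :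
    ∑' l, transport P ξ τ k l = P.bind ξ (cube k) := by
  rw [bind_apply_of_isRandomMeasure hξ (measurableSet_cube k)]
  unfold transport
  rw [← lintegral_tsum fun l => aemeasurable_section hξ (measurableSet_cube k)
    (ae_cube_lt_top hflow hstat hξ hinv hfin k) (measurableSet_target hτ.1 l)]
  refine lintegral_congr_ae ?_
  filter_upwards [hbal] with ω hω
  rw [← measure_iUnion]
  · refine measure_congr ?_
    filter_upwards [show ∀ᵐ z ∂ξ ω, τ ω z ≠ none from
      measure_eq_zero_iff_ae_notMem.1 hω.1] with z hz
    obtain ⟨y, hy⟩ := Option.ne_none_iff_exists'.1 hz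
    refine propext ⟨fun h => ?_, fun h => ?_⟩
    · obtain ⟨l, hl⟩ := Set.mem_iUnion.1 h
      exact hl.1
    · exact Set.mem_iUnion.2 ⟨fl y, h, y, rfl, hy⟩
  · intro l l' hll
    refine Set.disjoint_left.2 ?_
    rintro z ⟨-, y, hy, hz⟩ ⟨-, y', hy', hz'⟩
    have h : τ ω z = some y := hz
    have h' : τ ω z = some y' := hz'
    obtain rfl : y = y' := Option.some_injective _ (h.symm.trans h')
    exact hll (hy.symm.trans hy')
  · exact fun l => (measurableSet_cube k).inter
      (measurable_prodMk_left (measurableSet_target hτ.1 l))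

/-- Summing over the source cubes: the mass received is that of `η`. -/
lemma transport_in {d : ℕ} {P : Measure Ω} {θ : Rd d → Ω → Ω} {ξ η : Ω → Measure (Rd d)}
    {τ : Ω → Rd d → Option (Rd d)} (hflow : IsMeasurableFlow θ) (hstat : IsStationary P θ)
    (hξ : IsRandomMeasure P ξ) (hη : IsRandomMeasure P η) (hinv : IsFlowInvariant P θ ξ)
    (hfin : intensity P ξ < ∞)
    (hτ : IsAllocation P θ τ) (hbal : Balances P ξ η τ) (l : Fin d → ℤ) :
    ∑' k, transport P ξ τ k l = P.bind η (cube l) := by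
  rw [bind_apply_of_isRandomMeasure hη (measurableSet_cube l)]
  unfold transport
  rw [← lintegral_tsum fun k => aemeasurable_section hξ (measurableSet_cube k)
    (ae_cube_lt_top hflow hstat hξ hinv hfin k) (measurableSet_target hτ.1 l)]
  refine lintegral_congr_ae ?_
  filter_upwards [hbal] with ω hω
  rw [← hω.2 _ (measurableSet_cube l)]
  simp_rw [Set.inter_comm (cube _)]
  exact tsum_measure_inter_fiber (ξ ω) measurableSet_cube
    (measurable_prodMk_left (measurableSet_target hτ.1 l))

/-- If jointly stationary random measures `ξ` and `η` on `ℝ^d` with finite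
intensities are balanced by some allocation `τ`, then `λ_ξ = λ_η`. -/
theorem intensity_eq_of_balances
    {d : ℕ} {Ω : Type*} [MeasurableSpace Ω] (P : Measure Ω) [IsProbabilityMeasure P]
    (θ : Rd d → Ω → Ω) (ξ η : Ω → Measure (Rd d))
    (hflow : IsMeasurableFlow θ) (hstat : IsStationary P θ)
    (hξ : IsRandomMeasure P ξ) (hη : IsRandomMeasure P η)
    (hξinv : IsFlowInvariant P θ ξ) (hηinv : IsFlowInvariant P θ η)
    (hξfin : intensity P ξ < ∞) (hηfin : intensity P η < ∞)
    (τ : Ω → Rd d → Option (Rd d))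
    (hτ : IsAllocation P θ τ) (hbal : Balances P ξ η τ) :
    intensity P ξ = intensity P η := by
  have := bind_isAddLeftInvariant hflow hstat hξ hξinv
  have := bind_isAddLeftInvariant hflow hstat hη hηinv
  have := bind_isFiniteMeasureOnCompacts hξ hξfin
  have := bind_isFiniteMeasureOnCompacts hη hηfin
  have key : P.bind ξ (cube 0) = P.bind η (cube 0) := by
    rw [← transport_out hflow hstat hξ hξinv hξfin hτ hbal 0,
      ← transport_in hflow hstat hξ hη hξinv hξfin hτ hbal 0,
      ← (Equiv.neg (Fin d → ℤ)).tsum_eq fun k => transport P ξ τ k 0]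
    refine tsum_congr fun l => ?_
    rw [← transport_shift hflow hstat hξ hξinv hξfin hτ 0 l (-l)]
    simp
  have h1 := Measure.isAddLeftInvariant_eq_smul (P.bind ξ) volume
  have h2 := Measure.isAddLeftInvariant_eq_smul (P.bind η) volume
  generalize Measure.addHaarScalarFactor (P.bind ξ) volume = a at h1
  generalize Measure.addHaarScalarFactor (P.bind η) volume = b at h2
  have hab : a = b := by
    rw [h1, h2] at key
    rw [Measure.smul_apply, Measure.smul_apply, volume_cube_zero, ENNReal.smul_def,
      ENNReal.smul_def, smul_eq_mul, smul_eq_mul, mul_one, mul_one] at key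
    exact ENNReal.coe_injective key
  unfold intensity
  rw [← bind_apply_of_isRandomMeasure hξ measurableSet_unitCube,
    ← bind_apply_of_isRandomMeasure hη measurableSet_unitCube, h1, h2, hab]

end Paper
end
end

section
/- Let N be a stationary ergodic simple point process of intensity 1 on ℝ (identified with the y-axis of ℝ²), and suppose τ₁ is an allocation on ℝ balancing one-dimensional Lebesgue measure λ₁ and N. Let η be the random measure on ℝ² formed by one-dimensional Lebesgue measure on the horizontal lines through the points of N. Then τ defined by τ(ω, (x, y)) := (x, τ₁(ω, y)) is an allocation on ℝ² balancing two-dimensional Lebesgue measure λ₂ and η. -/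
/-! The equivariance of the product map reduces to that of `τ₁`: since horizontal translations
act trivially, `θ (x, y) = θ (0, y)`.

For the balancing property, replace `τ₁ ω` by the real-valued measurable function
`f ω t := (τ₁ ω t).getD 0`, which differs from it only on the null set `{τ₁ ω = ∞}`. Balancing
of `λ₁` and `N` says that `f ω` pushes `λ₁` to `N ω`. Hence `id × f ω` pushes `λ₂ = λ₁ ⊗ λ₁` to
`λ₁ ⊗ N ω`, and `id × f ω` agrees with the product map off the null set `ℝ × {τ₁ ω = ∞}`. -/

open MeasureTheory ENNReal

noncomputable section

namespace Paper

variable {Ω : Type*} [MeasurableSpace Ω]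
variable {G : Type*} [MeasurableSpace G] [TopologicalSpace G] [AddCommGroup G]

/-- The σ-algebra on `Option α` is the final one along `some`, so measurability out of it is
tested on `α`. -/
lemma measurable_of_comp_some {α β : Type*} [MeasurableSpace α] [MeasurableSpace β]
    {g : Option α → β} (hg : Measurable fun a => g (some a)) : Measurable g :=
  fun _ hs => hg hs

lemma measurableSet_option_none {α : Type*} [MeasurableSpace α] :
    MeasurableSet ({none} : Set (Option α)) := by
  change MeasurableSet (some ⁻¹' ({none} : Set (Option α)))
  convert MeasurableSet.empty
  ext a
  simp

/-- Joint measurability of the product map, on an arbitrary parameter space. -/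
lemma measurable_product_map {X : Type*} [MeasurableSpace X] {σ : X → Option ℝ} {h : X → ℝ}
    (hσ : Measurable σ) (hh : Measurable h) :
    Measurable fun p => Option.map (fun t => (h p, t)) (σ p) := by
  intro A hA
  have hB : MeasurableSet (some ⁻¹' A : Set (ℝ × ℝ)) := hA
  have hS : MeasurableSet (σ ⁻¹' {none}) := hσ measurableSet_option_none
  have hf : Measurable fun p => (σ p).getD 0 :=
    (measurable_of_comp_some (g := fun o : Option ℝ => o.getD 0) measurable_id).comp hσ
  have hE : MeasurableSet ((fun p => (h p, (σ p).getD 0)) ⁻¹' (some ⁻¹' A)) :=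
    (hh.prodMk hf) hB
  have key : (fun p => Option.map (fun t => (h p, t)) (σ p)) ⁻¹' A =
      (σ ⁻¹' {none} ∩ {_p | none ∈ A}) ∪
        ((σ ⁻¹' {none})ᶜ ∩ (fun p => (h p, (σ p).getD 0)) ⁻¹' (some ⁻¹' A)) := by
    ext p
    rcases hp : σ p with _ | t <;> simp [hp]
  rw [key]
  exact (hS.inter (MeasurableSet.const _)).union (hS.compl.inter hE)

/-- The balancing property for a single realization: `σ` stands for `τ₁ ω` and `ν` for `N ω`. -/
lemma product_balances_of_measurable {σ : ℝ → Option ℝ} {ν : Measure ℝ} (hσ : Measurable σ)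
    (hnone : volume {t : ℝ | σ t = none} = 0)
    (hbal : ∀ C : Set ℝ, MeasurableSet C → volume {t : ℝ | ∃ s ∈ C, σ t = some s} = ν C) :
    (volume : Measure (ℝ × ℝ))
        {z : ℝ × ℝ | Option.map (fun t => (z.1, t)) (σ z.2) = none} = 0 ∧
      ∀ C : Set (ℝ × ℝ), MeasurableSet C →
        (volume : Measure (ℝ × ℝ))
            {z : ℝ × ℝ | ∃ y ∈ C, Option.map (fun t => (z.1, t)) (σ z.2) = some y} =
          (volume : Measure ℝ).prod ν C := by
  have hf : Measurable fun t => (σ t).getD 0 :=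
    (measurable_of_comp_some (g := fun o : Option ℝ => o.getD 0) measurable_id).comp hσ
  have hnull : (volume : Measure (ℝ × ℝ))
      {z : ℝ × ℝ | Option.map (fun t => (z.1, t)) (σ z.2) = none} = 0 := by
    have : {z : ℝ × ℝ | Option.map (fun t => (z.1, t)) (σ z.2) = none} =
        Set.univ ×ˢ {t | σ t = none} := by
      ext z
      simp
    rw [this, Measure.volume_eq_prod, Measure.prod_prod, hnone, mul_zero]
  refine ⟨hnull, fun C hC => ?_⟩
  have hmap : (volume : Measure ℝ).map (fun t => (σ t).getD 0) = ν := by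
    ext D hD
    rw [Measure.map_apply hf hD, ← hbal D hD]
    apply measure_congr
    have hae : ∀ᵐ t : ℝ, σ t ≠ none := by simpa [ae_iff] using hnone
    filter_upwards [hae] with t ht
    obtain ⟨s, hs⟩ := Option.ne_none_iff_exists'.1 ht
    apply propext
    change (σ t).getD 0 ∈ D ↔ ∃ s ∈ D, σ t = some s
    simp [hs]
  have hprod : (volume : Measure ℝ).prod ν =
      ((volume : Measure ℝ).prod (volume : Measure ℝ)).map
        (Prod.map id fun t => (σ t).getD 0) := by
    rw [← Measure.map_prod_map _ _ measurable_id hf, hmap, Measure.map_id]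
  rw [hprod, Measure.map_apply (measurable_id.prodMap hf) hC, ← Measure.volume_eq_prod]
  apply measure_congr
  have hae : ∀ᵐ z : ℝ × ℝ, ¬ Option.map (fun t => (z.1, t)) (σ z.2) = none := by
    simpa only [ae_iff, not_not] using hnull
  filter_upwards [hae] with z hz
  obtain ⟨s, hs⟩ : ∃ s, σ z.2 = some s := Option.ne_none_iff_exists'.1 (by simpa using hz)
  apply propext
  change (∃ y ∈ C, Option.map (fun t => (z.1, t)) (σ z.2) = some y) ↔
    (z.1, (σ z.2).getD 0) ∈ C
  simp [hs]

/-- **The product allocation of Remark 9.2.** Let `N` be a stationary ergodic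
simple point process of intensity 1 on the `y`-axis of `ℝ²`, and let `τ₁` be an
allocation on `ℝ` balancing one-dimensional Lebesgue measure `λ₁` and `N`. Let
`η` be one-dimensional Lebesgue measure on the horizontal lines through the
points of `N` (i.e. `η(ω) = λ₁ ⊗ N(ω)`). Then `τ(ω, (x, y)) := (x, τ₁(ω, y))`
is an allocation on `ℝ²` balancing `λ₂` and `η`. -/
theorem product_allocation_balances
    {Ω : Type*} [MeasurableSpace Ω] (P : Measure Ω) [IsProbabilityMeasure P]
    (θ : ℝ × ℝ → Ω → Ω)
    (hflow : IsMeasurableFlow θ) (hstat : IsStationary P θ) (herg : IsErgodicFlow P θ)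
    (htriv : ∀ x : ℝ, θ (x, (0 : ℝ)) = id)
    (N : Ω → Measure ℝ)
    (hN : IsRandomMeasure P N) (hNsimple : IsSimplePointProcess P N)
    -- a translation by `(x, y)` shifts `N` by `y`
    (hNshift : ∀ v : ℝ × ℝ, ∀ᵐ ω ∂P, N (θ v ω) = (N ω).map (fun t => t - v.2))
    -- `N` has intensity 1
    (hNint : (∫⁻ ω, N ω (Set.Icc (0 : ℝ) 1) ∂P) = 1)
    -- `τ₁` is an allocation on `ℝ` (equivariant under vertical translations)
    (τ₁ : Ω → ℝ → Option ℝ)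
    (hτ₁meas : Measurable fun p : Ω × ℝ => τ₁ p.1 p.2)
    (hτ₁equi : ∀ᵐ ω ∂P, ∀ t y : ℝ,
      τ₁ (θ ((0 : ℝ), y) ω) (t - y) = Option.map (fun s => s - y) (τ₁ ω t))
    -- `τ₁` balances `λ₁` and `N`
    (hτ₁bal : ∀ᵐ ω ∂P, (volume {t : ℝ | τ₁ ω t = none} = 0) ∧
      ∀ C : Set ℝ, MeasurableSet C →
        volume {t : ℝ | ∃ s ∈ C, τ₁ ω t = some s} = N ω C) :
    IsAllocation P θ (fun ω p => Option.map (fun t => (p.1, t)) (τ₁ ω p.2)) ∧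
      Balances P (fun _ : Ω => (volume : Measure (ℝ × ℝ)))
        (fun ω => (volume : Measure ℝ).prod (N ω))
        (fun ω p => Option.map (fun t => (p.1, t)) (τ₁ ω p.2)) := by
  refine ⟨⟨?_, ?_⟩, ?_⟩
  · exact measurable_product_map (X := Ω × ℝ × ℝ) (σ := fun p => τ₁ p.1 p.2.2)
      (h := fun p => p.2.1)
      (hτ₁meas.comp (measurable_fst.prodMk measurable_snd.snd)) measurable_snd.fst
  · filter_upwards [hτ₁equi] with ω hω
    rintro ⟨x₁, x₂⟩ ⟨y₁, y₂⟩
    have hθ : θ (y₁, y₂) = θ (0, y₂) := by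
      have := hflow.comp (y₁, 0) (0, y₂)
      rw [htriv] at this
      simpa using this.symm
    simp only [hθ, Prod.mk_sub_mk, hω, Option.map_map]
    rfl
  · filter_upwards [hτ₁bal] with ω hω
    exact product_balances_of_measurable (hτ₁meas.comp measurable_prodMk_left) hω.1 hω.2

end Paper
end
end
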